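/- (Theorem B) Let c₀(t) := (arctan t, log(1+t²)/√2, t − arctan t) on I₀ := [1/10, 9/10] and α(t) := π(t+10)/24. Let P₁(δ) := φ_f(Ω_δ), P₂(δ) := ψ_f(Ω_δ), P₃(δ) := φ_{f_*}(Ω_δ), P₄(δ) := ψ_{f_*}(Ω_δ) be the images of the four origami maps on Ω_δ := I₀ × (−δ, δ), built as described in the context. Then for all sufficiently small ε > 0 the following holds: for every δ ∈ (0, ε], every i, j ∈ {1,2,3,4} and every isometry T of ℝ³, if T(P_i(δ)) ⊆ P_j(ε) then i = j. In particular the four curved foldings are mutually non-congruent. -/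

import Mathlib

noncomputable section
open Real Set
open scoped ContDiff

local notation "⟪" x ", " y "⟫" => @inner ℝ _ _ x y

/-- Euclidean 3-space. -/
abbrev E3 := EuclideanSpace ℝ (Fin 3)

/-- The vector (cross) product of `ℝ³`. -/
def cross3 (u v : E3) : E3 :=
  (WithLp.equiv 2 (Fin 3 → ℝ)).symm
    ![u 1 * v 2 - u 2 * v 1, u 2 * v 0 - u 0 * v 2, u 0 * v 1 - u 1 * v 0]

/-- The space curve `c₀(t) = (arctan t, log(1+t²)/√2, t - arctan t)`. -/
def c₀ : ℝ → E3 := fun t =>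
  (WithLp.equiv 2 (Fin 3 → ℝ)).symm
    ![arctan t, log (1 + t ^ 2) / Real.sqrt 2, t - arctan t]

/-- The orientation-reversed curve `c₀^♯(t) = c₀(1 - t)`. -/
def c₀r : ℝ → E3 := fun t => c₀ (1 - t)

/-- Unit tangent of a unit-speed curve. -/
def tang (γ : ℝ → E3) : ℝ → E3 := fun t => deriv γ t

/-- Curvature `κ = |γ''|` of a unit-speed curve. -/
def curv (γ : ℝ → E3) : ℝ → ℝ := fun t => ‖deriv (deriv γ) t‖

/-- Unit principal normal `n = γ''/κ` of a unit-speed curve. -/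
def pnorm (γ : ℝ → E3) : ℝ → E3 := fun t => (curv γ t)⁻¹ • deriv (deriv γ) t

/-- Unit binormal `b = e × n` of a unit-speed curve. -/
def binorm (γ : ℝ → E3) : ℝ → E3 := fun t => cross3 (tang γ t) (pnorm γ t)

/-- Torsion `τ = n' · b` of a unit-speed curve. -/
def tors (γ : ℝ → E3) : ℝ → ℝ := fun t => ⟪deriv (pnorm γ) t, binorm γ t⟫

/-- The first angular function `α(t) = π(t+10)/24`. -/
def α₀ : ℝ → ℝ := fun t => π * (t + 10) / 24

/-- The first angular function `α_*` of the inverse strip, the function with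
values in `(0, π/2)` determined by `cos α_*(t) = κ(t) cos α(t)/κ^♯(t)`,
where `κ^♯` is the curvature of `c₀^♯` (realized by `arccos`). -/
def α₀st : ℝ → ℝ := fun t => Real.arccos (curv c₀ t * cos (α₀ t) / curv c₀r t)

/-!
At a point of the crease, the tangent cone of the folded set is a pair of half-planes bounded by the
tangent line, each making the angle `α` with the osculating plane; away from the crease the tangent
cones lie in planes. An isometry `T` carrying one folding into another therefore carries crease
points to crease points. Since the curvature of `c₀` is injective, such a `T` fixes the crease
pointwise, and since the torsion does not vanish, `T` is the identity. Comparing the tangent cones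
at each crease point then shows that the two angular functions agree. Measured along `c₀`, the four
angular functions are `±α(t)` and `∓α_*(1 - t)`, and these take four different values at `t = 1/4`.
-/

open Filter Topology
open scoped NNReal

section TangentCone

theorem exists_eventually_norm_sub_le_of_ne {E F : Type*} [SeminormedAddCommGroup E]
    [NormedAddCommGroup F] {f : E → F} {x y : E} (hx : ContinuousAt f x)
    (hy : ContinuousAt f y) (hne : f x ≠ f y) :
    ∃ C : ℝ, ∀ᶠ z : E × E in 𝓝 (x, y), ‖z.1 - z.2‖ ≤ C * ‖f z.1 - f z.2‖ := by
  have num : ContinuousAt (fun z : E × E ↦ ‖z.1 - z.2‖) (x, y) := by fun_prop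
  have den : ContinuousAt (fun z : E × E ↦ ‖f z.1 - f z.2‖) (x, y) :=
    ((hx.comp (f := Prod.fst) continuousAt_fst).sub
      (hy.comp (f := Prod.snd) continuousAt_snd)).norm
  have hpos : 0 < ‖f x - f y‖ := norm_sub_pos_iff.2 hne
  refine ⟨‖x - y‖ / ‖f x - f y‖ + 1, ?_⟩
  have hlt : ‖x - y‖ < (‖x - y‖ / ‖f x - f y‖ + 1) * ‖f x - f y‖ := by
    rw [add_mul, div_mul_cancel₀ _ hpos.ne']
    linarith
  exact (num.eventually_lt (den.const_mul _) hlt).mono fun _ h ↦ h.le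

variable {E F : Type*} [NormedAddCommGroup E] [NormedSpace ℝ E]
  [NormedAddCommGroup F] [NormedSpace ℝ F]

theorem mapsTo_posTangentConeAt_image {f : E → F} {f' : E →L[ℝ] F} {s : Set E} {x : E}
    (hf : HasFDerivWithinAt f f' s x) :
    MapsTo f' (posTangentConeAt s x) (posTangentConeAt (f '' s) (f x)) := by
  intro v hv
  obtain ⟨ι, l, hl, c, d, hd, hds, hcd⟩ := exists_fun_of_mem_tangentConeAt hv
  refine mem_tangentConeAt_of_seq l c (fun n ↦ f (x + d n) - f x) ?_ ?_ ?_
  · rw [tendsto_sub_nhds_zero_iff]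
    refine hf.continuousWithinAt.tendsto.comp <| tendsto_nhdsWithin_iff.mpr ⟨?_, hds⟩
    simpa only [add_zero] using tendsto_const_nhds.add hd
  · exact hds.mono fun n hn ↦ ⟨x + d n, hn, by rw [add_sub_cancel]⟩
  · exact hf.lim hd hds hcd

theorem posTangentConeAt_image_subset_of_antilipschitzWith [ProperSpace E] {f : E → F}
    {f' : E →L[ℝ] F} {s : Set E} {x : E} {C : ℝ≥0} (hanti : AntilipschitzWith C (s.domRestrict f))
    (hx : x ∈ s) (hf : HasFDerivWithinAt f f' s x) :
    posTangentConeAt (f '' s) (f x) ⊆ f' '' posTangentConeAt s x := by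
  intro v hv
  obtain ⟨ι, l, hl, c, d, hd, hds, hcd⟩ := exists_fun_of_mem_tangentConeAt hv
  set q : ι → E := fun n ↦ Function.invFunOn f s (f x + d n) - x
  have hq : ∀ᶠ n in l, x + q n ∈ s ∧ f (x + q n) - f x = d n := hds.mono fun n hn ↦ by
    simp only [q, add_sub_cancel, Function.invFunOn_eq hn, add_sub_cancel_left, and_true]
    exact Function.invFunOn_mem hn
  have norm_q_le : ∀ᶠ n in l, ‖q n‖ ≤ C * ‖d n‖ := hq.mono fun n ⟨hs, hfd⟩ ↦ by
    simpa only [Subtype.dist_eq, dist_eq_norm, domRestrict_apply, add_sub_cancel_left, hfd]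
      using hanti.le_mul_dist ⟨x + q n, hs⟩ ⟨x, hx⟩
  have q_tendsto : Tendsto q l (𝓝 0) :=
    squeeze_zero_norm' norm_q_le (by simpa using hd.norm.const_mul (C : ℝ))
  have bounded : ∀ᶠ n in l, c n • q n ∈ Metric.closedBall (0 : E) (C * (‖v‖ + 1)) := by
    filter_upwards [norm_q_le, hcd.norm.eventually_le_const (lt_add_one ‖v‖)] with n hn hv
    rw [mem_closedBall_zero_iff]
    calc ‖c n • q n‖ = c n * ‖q n‖ := by simp [NNReal.smul_def, norm_smul]
      _ ≤ c n * (C * ‖d n‖) := by gcongr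
      _ = C * ‖c n • d n‖ := by simp only [NNReal.smul_def, norm_smul, NNReal.norm_eq]; ring
      _ ≤ C * (‖v‖ + 1) := by gcongr
  have hU := Ultrafilter.of_le l
  obtain ⟨w, hw⟩ : ∃ w, Tendsto (fun n ↦ c n • q n) (Ultrafilter.of l) (𝓝 w) :=
    have ⟨w, _, hw⟩ := (isCompact_closedBall (0 : E) (C * (‖v‖ + 1))).ultrafilter_le_nhds'
      ((Ultrafilter.of l).map fun n ↦ c n • q n) (hU bounded)
    ⟨w, hw⟩
  have hqs : ∀ᶠ n in Ultrafilter.of l, x + q n ∈ s := hU (hq.mono fun n hn ↦ hn.1)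
  refine ⟨w, mem_tangentConeAt_of_seq (Ultrafilter.of l) c q (q_tendsto.mono_left hU)
    hqs hw, ?_⟩
  refine tendsto_nhds_unique (hf.lim (q_tendsto.mono_left hU) hqs hw)
    ((hcd.mono_left hU).congr' (hU <| hq.mono fun n hn ↦ ?_))
  rw [← hn.2, NNReal.smul_def]

theorem posTangentConeAt_subset_of_eventually {s Q : Set E} {x : E} (hQ : IsClosed Q)
    (hsmul : ∀ c : ℝ≥0, ∀ v ∈ Q, c • v ∈ Q) (hs : ∀ᶠ y in 𝓝[s] x, y - x ∈ Q) :
    posTangentConeAt s x ⊆ Q := by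
  intro v hv
  obtain ⟨ι, l, hl, c, d, hd, hds, hcd⟩ := exists_fun_of_mem_tangentConeAt hv
  have hxd : Tendsto (fun n ↦ x + d n) l (𝓝[s] x) :=
    tendsto_nhdsWithin_iff.mpr ⟨by simpa only [add_zero] using tendsto_const_nhds.add hd, hds⟩
  refine hQ.mem_of_tendsto hcd ((hxd.eventually hs).mono fun n hn ↦ hsmul _ _ ?_)
  rwa [add_sub_cancel_left] at hn

theorem exists_mem_nhdsSet_antilipschitzWith {f : E → F} {f' : E → E →L[ℝ] F} {K : Set E}
    (hK : IsCompact K) (hinj : InjOn f K) (hf : ∀ x ∈ K, HasStrictFDerivAt f (f' x) x)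
    (hf' : ∀ x ∈ K, IsInducing (f' x)) :
    ∃ U ∈ 𝓝ˢ K, ∃ C : ℝ≥0, AntilipschitzWith C (U.domRestrict f) := by
  have local_bound : ∀ z ∈ K ×ˢ K, ∃ C : ℝ, ∀ᶠ y in 𝓝 z, ‖y.1 - y.2‖ ≤ C * ‖f y.1 - f y.2‖ := by
    rintro ⟨x, y⟩ ⟨hx, hy⟩
    rcases eq_or_ne x y with rfl | hne
    · exact ((hf x hx).isTheta_sub (hf' x hx)).isBigO_symm.bound
    · exact exists_eventually_norm_sub_le_of_ne (hf x hx).continuousAt (hf y hy).continuousAt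
        (hinj.ne hx hy hne)
  have bound : ∃ C : ℝ, ∀ᶠ z in 𝓝ˢ (K ×ˢ K), ‖z.1 - z.2‖ ≤ C * ‖f z.1 - f z.2‖ := by
    refine (hK.prod hK).induction_on (by simp) ?_ ?_ ?_
    · exact fun A B hAB ⟨C, hC⟩ ↦ ⟨C, hC.filter_mono (nhdsSet_mono hAB)⟩
    · rintro A B ⟨C, hC⟩ ⟨D, hD⟩
      refine ⟨max C D, ?_⟩
      rw [nhdsSet_union, eventually_sup]
      exact ⟨hC.mono fun z hz ↦ hz.trans (by gcongr; exact le_max_left C D),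
        hD.mono fun z hz ↦ hz.trans (by gcongr; exact le_max_right C D)⟩
    · intro z hz
      obtain ⟨C, hC⟩ := local_bound z hz
      exact ⟨_, mem_nhdsWithin_of_mem_nhds hC.eventually_nhds, C,
        eventually_nhdsSet_iff_forall.2 fun y hy ↦ hy⟩
  obtain ⟨C, hC⟩ := bound
  rw [hK.nhdsSet_prod_eq hK] at hC
  obtain ⟨U, hU, hUC⟩ :=
    (eventually_prod_self_iff (r := fun x y ↦ ‖x - y‖ ≤ C * ‖f x - f y‖)).1 hC
  refine ⟨U, hU, C.toNNReal, AntilipschitzWith.of_le_mul_dist fun x y ↦ ?_⟩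
  calc dist x y ≤ C * dist (U.domRestrict f x) (U.domRestrict f y) := by
        simpa only [dist_eq_norm, Subtype.dist_eq, domRestrict_apply] using hUC _ x.2 _ y.2
    _ ≤ C.toNNReal * dist (U.domRestrict f x) (U.domRestrict f y) := by
        gcongr
        exact le_coe_toNNReal C

end TangentCone

section FoldedStrip

variable {E : Type*} [NormedAddCommGroup E] [NormedSpace ℝ E]

/-- The boundary of the first quadrant. Bending the ruling parameter `v` to `(v⁺, v⁻)` turns a
pair of half-rulings into a single chart on this set. -/
def quadrantBoundary : Set (ℝ × ℝ) := {q | 0 ≤ q.1 ∧ 0 ≤ q.2 ∧ q.1 * q.2 = 0}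

/-- The parameter domain of a folded strip of width `ε` over the crease parameters `I`. -/
def foldDomain (I : Set ℝ) (ε : ℝ) : Set (ℝ × ℝ × ℝ) :=
  I ×ˢ (quadrantBoundary ∩ Metric.ball 0 ε)

/-- The ruled three-parameter map `(t, x, y) ↦ c t + x X t + y Y t`, whose restriction to
`foldDomain` parametrizes a folded strip. -/
def wedgeMap (c X Y : ℝ → E) (p : ℝ × ℝ × ℝ) : E := c p.1 + p.2.1 • X p.1 + p.2.2 • Y p.1

/-- The folded strip of width `ε` along the crease `c`, made of the half-rulings that leave `c`
in the directions `X` and `Y`. -/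
def foldedStrip (I : Set ℝ) (c X Y : ℝ → E) (ε : ℝ) : Set E := wedgeMap c X Y '' foldDomain I ε

/-- The linear map `(r, x, y) ↦ r u + x v + y w`. -/
def frameMap (u v w : E) : ℝ × ℝ × ℝ →L[ℝ] E :=
  (ContinuousLinearMap.toSpanSingleton ℝ u).coprod
    ((ContinuousLinearMap.toSpanSingleton ℝ v).coprod (ContinuousLinearMap.toSpanSingleton ℝ w))

theorem frameMap_apply (u v w : E) (p : ℝ × ℝ × ℝ) :
    frameMap u v w p = p.1 • u + p.2.1 • v + p.2.2 • w := by
  simp [frameMap, add_assoc]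

theorem isInducing_frameMap {u v w : E} (h : LinearIndependent ℝ ![u, v, w]) :
    IsInducing (frameMap u v w) := by
  refine (LinearMap.isClosedEmbedding_of_injective (f := (frameMap u v w).toLinearMap)
    (LinearMap.ker_eq_bot'.2 fun p hp ↦ ?_)).isInducing
  have hp : p.1 • u + p.2.1 • v + p.2.2 • w = 0 := by rw [← frameMap_apply]; exact hp
  have h0 := Fintype.linearIndependent_iff.1 h ![p.1, p.2.1, p.2.2] (by simpa [Fin.sum_univ_three])
  exact Prod.ext (h0 0) (Prod.ext (h0 1) (h0 2))

theorem hasStrictFDerivAt_wedgeMap {c X Y : ℝ → E} {p : ℝ × ℝ × ℝ} (hc : ContDiffAt ℝ 1 c p.1)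
    (hX : ContDiffAt ℝ 1 X p.1) (hY : ContDiffAt ℝ 1 Y p.1) :
    HasStrictFDerivAt (wedgeMap c X Y)
      (frameMap (deriv c p.1 + p.2.1 • deriv X p.1 + p.2.2 • deriv Y p.1) (X p.1) (Y p.1)) p := by
  have comp_fst {Z : ℝ → E} (hZ : ContDiffAt ℝ 1 Z p.1) :=
    (hZ.hasStrictDerivAt one_ne_zero).hasStrictFDerivAt.comp p
      (hasStrictFDerivAt_fst (𝕜 := ℝ) (p := p))
  have hx : HasStrictFDerivAt (𝕜 := ℝ) (fun q : ℝ × ℝ × ℝ ↦ q.2.1) _ p :=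
    hasStrictFDerivAt_fst.comp p hasStrictFDerivAt_snd
  have hy : HasStrictFDerivAt (𝕜 := ℝ) (fun q : ℝ × ℝ × ℝ ↦ q.2.2) _ p :=
    hasStrictFDerivAt_snd.comp p hasStrictFDerivAt_snd
  refine (((comp_fst hc).add (hx.smul (comp_fst hX))).add
    (hy.smul (comp_fst hY))).congr_fderiv ?_
  ext <;> simp [frameMap_apply]

theorem smul_mem_quadrantBoundary {q : ℝ × ℝ} (hq : q ∈ quadrantBoundary) {r : ℝ} (hr : 0 ≤ r) :
    r • q ∈ quadrantBoundary := by
  obtain ⟨h1, h2, h12⟩ := hq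
  refine ⟨mul_nonneg hr h1, mul_nonneg hr h2, ?_⟩
  simp only [Prod.smul_fst, Prod.smul_snd, smul_eq_mul]
  linear_combination r ^ 2 * h12

theorem isClosed_quadrantBoundary : IsClosed quadrantBoundary :=
  (isClosed_le continuous_const continuous_fst).inter
    ((isClosed_le continuous_const continuous_snd).inter
      (isClosed_eq (continuous_fst.mul continuous_snd) continuous_const))

theorem posTangentConeAt_foldDomain_crease {I : Set ℝ} {ε t : ℝ} (hε : 0 < ε)
    (ht : t ∈ interior I) :
    posTangentConeAt (foldDomain I ε) (t, 0) = univ ×ˢ quadrantBoundary := by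
  refine Subset.antisymm (posTangentConeAt_subset_of_eventually
    (isClosed_univ.prod isClosed_quadrantBoundary) ?_ ?_) ?_
  · exact fun r v hv ↦ ⟨mem_univ _, smul_mem_quadrantBoundary hv.2 r.2⟩
  · filter_upwards [self_mem_nhdsWithin] with p hp
    exact ⟨mem_univ _, by simpa using hp.2.1⟩
  · rintro ⟨r, q⟩ ⟨-, hq⟩
    refine mem_posTangentConeAt_of_frequently_mem (Eventually.frequently ?_)
    have stays_in_I : ∀ᶠ s : ℝ in 𝓝 0, t + s • r ∈ I :=
      ContinuousAt.eventually_mem (f := fun s : ℝ ↦ t + s • r) (by fun_prop)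
        (by simpa using mem_interior_iff_mem_nhds.1 ht)
    have stays_small : ∀ᶠ s : ℝ in 𝓝 0, s • q ∈ Metric.ball (0 : ℝ × ℝ) ε :=
      ContinuousAt.eventually_mem (f := fun s : ℝ ↦ s • q) (by fun_prop)
        (by simpa using Metric.ball_mem_nhds 0 hε)
    filter_upwards [stays_in_I.filter_mono nhdsWithin_le_nhds,
      stays_small.filter_mono nhdsWithin_le_nhds, self_mem_nhdsWithin] with s hI hball hs
    refine ⟨hI, ?_, ?_⟩
    · simpa using smul_mem_quadrantBoundary hq (le_of_lt hs)
    · simpa using hball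

theorem posTangentConeAt_foldDomain_subset_of_ne {I : Set ℝ} {ε : ℝ} {p : ℝ × ℝ × ℝ}
    (hp : p ∈ foldDomain I ε) (hp0 : p.2 ≠ 0) :
    posTangentConeAt (foldDomain I ε) p ⊆ {v | v.2.2 = 0} ∨
      posTangentConeAt (foldDomain I ε) p ⊆ {v | v.2.1 = 0} := by
  obtain ⟨h1, h2, h12⟩ := hp.2.1
  rcases h1.lt_or_eq with hpos | hzero
  · refine Or.inl (posTangentConeAt_subset_of_eventually
      (isClosed_eq (by fun_prop) continuous_const) (by simp +contextual) ?_)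
    have near : ∀ᶠ q : ℝ × ℝ × ℝ in 𝓝 p, 0 < q.2.1 :=
      (continuous_snd.fst.tendsto p).eventually_const_lt hpos
    filter_upwards [near.filter_mono nhdsWithin_le_nhds, self_mem_nhdsWithin] with q hq hqS
    have hp2 : p.2.2 = 0 := (mul_eq_zero.1 h12).resolve_left hpos.ne'
    have hq2 : q.2.2 = 0 := (mul_eq_zero.1 hqS.2.1.2.2).resolve_left hq.ne'
    simp [hp2, hq2]
  · refine Or.inr (posTangentConeAt_subset_of_eventually
      (isClosed_eq (by fun_prop) continuous_const) (by simp +contextual) ?_)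
    have hpos : 0 < p.2.2 := h2.lt_of_ne fun h ↦ hp0 (Prod.ext hzero.symm h.symm)
    have near : ∀ᶠ q : ℝ × ℝ × ℝ in 𝓝 p, 0 < q.2.2 :=
      (continuous_snd.snd.tendsto p).eventually_const_lt hpos
    filter_upwards [near.filter_mono nhdsWithin_le_nhds, self_mem_nhdsWithin] with q hq hqS
    have hq1 : q.2.1 = 0 := (mul_eq_zero.1 hqS.2.1.2.2).resolve_right hq.ne'
    simp [← hzero, hq1]

theorem foldedStrip_mono (I : Set ℝ) (c X Y : ℝ → E) : Monotone (foldedStrip I c X Y) :=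
  fun _ _ h ↦ image_mono (prod_mono_right (inter_subset_inter_right _ (Metric.ball_subset_ball h)))

theorem crease_mem_foldedStrip {I : Set ℝ} {t ε : ℝ} (c X Y : ℝ → E) (ht : t ∈ I) (hε : 0 < ε) :
    c t ∈ foldedStrip I c X Y ε :=
  ⟨(t, 0), ⟨ht, by simp [quadrantBoundary], Metric.mem_ball_self hε⟩, by simp [wedgeMap]⟩

theorem foldedStrip_congr {I : Set ℝ} {c X Y X' Y' : ℝ → E} (hX : EqOn X X' I) (hY : EqOn Y Y' I)
    (ε : ℝ) : foldedStrip I c X Y ε = foldedStrip I c X' Y' ε :=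
  image_congr fun p hp ↦ by simp only [wedgeMap, hX hp.1, hY hp.1]

theorem foldedStrip_comp {I : Set ℝ} {c X Y : ℝ → E} {r : ℝ → ℝ} (hr : r '' I = I) (ε : ℝ) :
    foldedStrip I (c ∘ r) (X ∘ r) (Y ∘ r) ε = foldedStrip I c X Y ε := by
  have hdom : Prod.map r id '' foldDomain I ε = foldDomain I ε := by
    rw [foldDomain, prodMap_image_prod, hr, image_id]
  conv_rhs => rw [foldedStrip, ← hdom, image_image]
  rfl

theorem image_origami_eq_foldedStrip {I : Set ℝ} {c X Y : ℝ → E} {Φ : ℝ × ℝ → E} {ε : ℝ}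
    (hΦ : ∀ t v, Φ (t, v) = if 0 ≤ v then c t + v • X t else c t + v • Y t) :
    Φ '' (I ×ˢ Ioo (-ε) ε) = foldedStrip I c X (-Y) ε := by
  ext z
  constructor
  · rintro ⟨⟨t, v⟩, ⟨ht, hv⟩, rfl⟩
    have hv : |v| < ε := abs_lt.2 hv
    rw [hΦ]
    split_ifs with h0
    · exact ⟨(t, v, 0), ⟨ht, ⟨h0, le_rfl, mul_zero v⟩, by simpa [Prod.norm_def] using hv⟩,
        by simp [wedgeMap]⟩
    · exact ⟨(t, 0, -v), ⟨ht, ⟨le_rfl, by simpa using (not_le.1 h0).le, zero_mul _⟩,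
        by simpa [Prod.norm_def] using hv⟩, by simp [wedgeMap]⟩
  · rintro ⟨⟨t, x, y⟩, ⟨ht, ⟨hx, hy, hxy⟩, hball⟩, rfl⟩
    have hball : |x| < ε ∧ |y| < ε := by simpa [Prod.norm_def] using hball
    rcases hy.eq_or_lt with rfl | hy
    · exact ⟨(t, x), ⟨ht, abs_lt.1 hball.1⟩, by simp_all [wedgeMap]⟩
    · obtain rfl : x = 0 := (mul_eq_zero.1 hxy).resolve_right hy.ne'
      exact ⟨(t, -y), ⟨ht, abs_lt.1 (by simpa using hball.2)⟩, by simp_all [wedgeMap]⟩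

/-- The regularity of a folded strip that makes its crease visible: `C¹` data, an injective crease,
and half-rulings transverse to the crease and to each other. -/
structure IsFold (I : Set ℝ) (c X Y : ℝ → E) : Prop where
  contDiffAt_crease : ∀ t ∈ I, ContDiffAt ℝ 1 c t
  contDiffAt_left : ∀ t ∈ I, ContDiffAt ℝ 1 X t
  contDiffAt_right : ∀ t ∈ I, ContDiffAt ℝ 1 Y t
  injOn_crease : InjOn c I
  linearIndependent : ∀ t ∈ I, LinearIndependent ℝ ![deriv c t, X t, Y t]

namespace IsFold

variable {I : Set ℝ} {c X Y : ℝ → E} {ε : ℝ}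

theorem hasStrictFDerivAt_crease (h : IsFold I c X Y) {t : ℝ} (ht : t ∈ I) :
    HasStrictFDerivAt (wedgeMap c X Y) (frameMap (deriv c t) (X t) (Y t)) (t, 0) := by
  simpa using hasStrictFDerivAt_wedgeMap (p := (t, 0)) (h.contDiffAt_crease t ht)
    (h.contDiffAt_left t ht) (h.contDiffAt_right t ht)

theorem exists_antilipschitzWith (h : IsFold I c X Y) (hI : IsCompact I) :
    ∃ ε > 0, ∃ C : ℝ≥0, AntilipschitzWith C ((foldDomain I ε).domRestrict (wedgeMap c X Y)) := by
  obtain ⟨U, hU, C, hC⟩ : ∃ U ∈ 𝓝ˢ (I ×ˢ {(0 : ℝ × ℝ)}), ∃ C : ℝ≥0,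
      AntilipschitzWith C (U.domRestrict (wedgeMap c X Y)) := by
    refine exists_mem_nhdsSet_antilipschitzWith (hI.prod isCompact_singleton)
      (f' := fun p ↦ frameMap (deriv c p.1) (X p.1) (Y p.1)) ?_ ?_ ?_
    · rintro ⟨s, _⟩ ⟨hs, rfl⟩ ⟨t, _⟩ ⟨ht, rfl⟩ hst
      simpa using h.injOn_crease hs ht (by simpa [wedgeMap] using hst)
    · rintro ⟨t, _⟩ ⟨ht, rfl⟩
      exact h.hasStrictFDerivAt_crease ht
    · exact fun p hp ↦ isInducing_frameMap (h.linearIndependent p.1 hp.1)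
  rw [hI.nhdsSet_prod_eq isCompact_singleton, nhdsSet_singleton, mem_prod_iff] at hU
  obtain ⟨V, hV, W, hW, hVW⟩ := hU
  obtain ⟨ε, hε, hball⟩ := Metric.mem_nhds_iff.1 hW
  have hsub : foldDomain I ε ⊆ U :=
    (prod_mono (subset_of_mem_nhdsSet hV) (inter_subset_right.trans hball)).trans hVW
  exact ⟨ε, hε, C, fun p q ↦ hC ⟨p, hsub p.2⟩ ⟨q, hsub q.2⟩⟩

theorem posTangentConeAt_crease_subset (h : IsFold I c X Y) {C : ℝ≥0}
    (hanti : AntilipschitzWith C ((foldDomain I ε).domRestrict (wedgeMap c X Y)))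
    (hε : 0 < ε) {t : ℝ} (ht : t ∈ interior I) :
    posTangentConeAt (foldedStrip I c X Y ε) (c t) ⊆
      frameMap (deriv c t) (X t) (Y t) '' (univ ×ˢ quadrantBoundary) := by
  have htI := interior_subset ht
  rw [← posTangentConeAt_foldDomain_crease hε ht]
  simpa [wedgeMap, foldedStrip] using posTangentConeAt_image_subset_of_antilipschitzWith hanti
    (x := (t, 0)) ⟨htI, by simp [quadrantBoundary], Metric.mem_ball_self hε⟩
    (h.hasStrictFDerivAt_crease htI).hasFDerivAt.hasFDerivWithinAt

theorem image_subset_posTangentConeAt_crease (h : IsFold I c X Y) (hε : 0 < ε) {t : ℝ}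
    (ht : t ∈ interior I) :
    frameMap (deriv c t) (X t) (Y t) '' (univ ×ˢ quadrantBoundary) ⊆
      posTangentConeAt (foldedStrip I c X Y ε) (c t) := by
  rw [← posTangentConeAt_foldDomain_crease hε ht]
  simpa [wedgeMap, foldedStrip] using (mapsTo_posTangentConeAt_image
    (h.hasStrictFDerivAt_crease (interior_subset ht)).hasFDerivAt.hasFDerivWithinAt).image_subset

theorem mem_crease_of_linearIndependent (h : IsFold I c X Y) {C : ℝ≥0}
    (hanti : AntilipschitzWith C ((foldDomain I ε).domRestrict (wedgeMap c X Y)))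
    {z : E} (hz : z ∈ foldedStrip I c X Y ε) {v : Fin 3 → E} (hv : LinearIndependent ℝ v)
    (hvz : ∀ i, v i ∈ posTangentConeAt (foldedStrip I c X Y ε) z) : z ∈ c '' I := by
  obtain ⟨p, hp, rfl⟩ := hz
  by_cases hp0 : p.2 = 0
  · exact ⟨p.1, hp.1, by simp [wedgeMap, hp0]⟩
  set u := deriv c p.1 + p.2.1 • deriv X p.1 + p.2.2 • deriv Y p.1
  have cone_subset : posTangentConeAt (foldedStrip I c X Y ε) (wedgeMap c X Y p) ⊆
      frameMap u (X p.1) (Y p.1) '' posTangentConeAt (foldDomain I ε) p :=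
    posTangentConeAt_image_subset_of_antilipschitzWith hanti hp
      (hasStrictFDerivAt_wedgeMap (h.contDiffAt_crease _ hp.1) (h.contDiffAt_left _ hp.1)
        (h.contDiffAt_right _ hp.1)).hasFDerivAt.hasFDerivWithinAt
  obtain ⟨w, hw⟩ : ∃ w, ∀ i, v i ∈ Submodule.span ℝ {u, w} := by
    simp only [Submodule.mem_span_pair]
    rcases posTangentConeAt_foldDomain_subset_of_ne hp hp0 with hplane | hplane
    · refine ⟨X p.1, fun i ↦ ?_⟩
      obtain ⟨q, hq, hqi⟩ := cone_subset (hvz i)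
      exact ⟨q.1, q.2.1, by simp [← hqi, frameMap_apply, show q.2.2 = 0 from hplane hq]⟩
    · refine ⟨Y p.1, fun i ↦ ?_⟩
      obtain ⟨q, hq, hqi⟩ := cone_subset (hvz i)
      exact ⟨q.1, q.2.2, by simp [← hqi, frameMap_apply, show q.2.1 = 0 from hplane hq]⟩
  have three_le_two : 3 ≤ 2 := calc
    3 = Module.finrank ℝ (Submodule.span ℝ (range v)) := by simp [finrank_span_eq_card hv]
    _ ≤ Module.finrank ℝ (Submodule.span ℝ ({u, w} : Set E)) :=
      have := FiniteDimensional.span_of_finite ℝ (toFinite {u, w})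
      Submodule.finrank_mono (Submodule.span_le.2 (range_subset_iff.2 hw))
    _ ≤ 2 := by
      classical
      simpa using (finrank_span_le_card ({u, w} : Set E)).trans (by simpa using Finset.card_le_two)
  omega

theorem mem_crease_of_image_subset {c' X' Y' : ℝ → E} {δ : ℝ} (h' : IsFold I c' X' Y')
    (h : IsFold I c X Y) {C : ℝ≥0}
    (hanti : AntilipschitzWith C ((foldDomain I ε).domRestrict (wedgeMap c X Y)))
    (hδ : 0 < δ) (T : E ≃ᵃⁱ[ℝ] E) (hT : T '' foldedStrip I c' X' Y' δ ⊆ foldedStrip I c X Y ε)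
    {t : ℝ} (ht : t ∈ interior I) : T (c' t) ∈ c '' I := by
  have htI := interior_subset ht
  have cone_mapsTo : ∀ v ∈ frameMap (deriv c' t) (X' t) (Y' t) '' (univ ×ˢ quadrantBoundary),
      T.linearIsometryEquiv v ∈ posTangentConeAt (foldedStrip I c X Y ε) (T (c' t)) := fun v hv ↦
    posTangentConeAt_mono hT (mapsTo_posTangentConeAt_image
      (T.toContinuousAffineEquiv.toContinuousAffineMap.hasFDerivAt).hasFDerivWithinAt
      (h'.image_subset_posTangentConeAt_crease hδ ht hv))
  refine h.mem_crease_of_linearIndependent hanti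
    (hT (mem_image_of_mem T (crease_mem_foldedStrip c' X' Y' htI hδ)))
    ((h'.linearIndependent t htI).map' T.linearIsometryEquiv.toLinearEquiv.toLinearMap
      T.linearIsometryEquiv.toLinearEquiv.ker) fun i ↦ cone_mapsTo _ ?_
  fin_cases i
  · exact ⟨(1, 0, 0), by simp [quadrantBoundary], by simp [frameMap_apply]⟩
  · exact ⟨(0, 1, 0), by simp [quadrantBoundary], by simp [frameMap_apply]⟩
  · exact ⟨(0, 0, 1), by simp [quadrantBoundary], by simp [frameMap_apply]⟩

theorem exists_left_eq_of_foldedStrip_subset {X' Y' : ℝ → E} {δ : ℝ} (h' : IsFold I c X' Y')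
    (h : IsFold I c X Y) {C : ℝ≥0}
    (hanti : AntilipschitzWith C ((foldDomain I ε).domRestrict (wedgeMap c X Y)))
    (hε : 0 < ε) (hδ : 0 < δ) (hsub : foldedStrip I c X' Y' δ ⊆ foldedStrip I c X Y ε)
    {t : ℝ} (ht : t ∈ interior I) :
    ∃ r : ℝ, ∃ q ∈ quadrantBoundary, X' t = r • deriv c t + q.1 • X t + q.2 • Y t := by
  have hX' : X' t ∈ posTangentConeAt (foldedStrip I c X Y ε) (c t) :=
    posTangentConeAt_mono hsub (h'.image_subset_posTangentConeAt_crease hδ ht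
      ⟨(0, 1, 0), by simp [quadrantBoundary], by simp [frameMap_apply]⟩)
  obtain ⟨p, hp, hpX⟩ := h.posTangentConeAt_crease_subset hanti hε ht hX'
  exact ⟨p.1, p.2, hp.2, by rw [← hpX, frameMap_apply]⟩

end IsFold

end FoldedStrip

section FrenetFrame

theorem apply_eq_of_hasDerivAt_of_eventually_fixed {E : Type*} [NormedAddCommGroup E]
    [NormedSpace ℝ E] {Φ : E → E} {Φ' : E →L[ℝ] E} {f : ℝ → E} {f' : E} {t : ℝ}
    (hf : HasDerivAt f f' t) (hΦ : HasFDerivAt Φ Φ' (f t)) (hfix : ∀ᶠ s in 𝓝 t, Φ (f s) = f s) :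
    Φ' f' = f' :=
  ((hΦ.comp_hasDerivAt t hf).congr_of_eventuallyEq (hfix.mono fun _ hs ↦ hs.symm)).unique hf

variable {E : Type*} [NormedAddCommGroup E] [InnerProductSpace ℝ E]

/-- `(e, n, b)` is an orthonormal moving frame along `γ` obeying the Frenet equations with
curvature `κ` and torsion `τ`. No equation for `b'` is imposed. -/
structure HasFrenetFrame (γ e n b : ℝ → E) (κ τ : ℝ → ℝ) : Prop where
  orthonormal : ∀ t, Orthonormal ℝ ![e t, n t, b t]
  hasDerivAt_curve : ∀ t, HasDerivAt γ (e t) t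
  hasDerivAt_tangent : ∀ t, HasDerivAt e (κ t • n t) t
  hasDerivAt_normal : ∀ t, HasDerivAt n (-κ t • e t + τ t • b t) t

namespace HasFrenetFrame

variable {γ e n b : ℝ → E} {κ τ : ℝ → ℝ}

theorem inner_tangent_self (h : HasFrenetFrame γ e n b κ τ) (t : ℝ) : ⟪e t, e t⟫ = 1 :=
  inner_self_eq_one_of_norm_eq_one ((h.orthonormal t).1 0)

theorem inner_tangent_normal (h : HasFrenetFrame γ e n b κ τ) (t : ℝ) : ⟪e t, n t⟫ = 0 :=
  (h.orthonormal t).2 (show (0 : Fin 3) ≠ 1 by decide)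

theorem norm_normal (h : HasFrenetFrame γ e n b κ τ) (t : ℝ) : ‖n t‖ = 1 :=
  (h.orthonormal t).1 1

theorem map (h : HasFrenetFrame γ e n b κ τ) (T : E ≃ᵃⁱ[ℝ] E) :
    HasFrenetFrame (T ∘ γ) (T.linearIsometryEquiv ∘ e) (T.linearIsometryEquiv ∘ n)
      (T.linearIsometryEquiv ∘ b) κ τ where
  orthonormal t := by
    convert (h.orthonormal t).comp_linearIsometryEquiv T.linearIsometryEquiv using 1
    ext i
    fin_cases i <;> rfl
  hasDerivAt_curve t :=
    T.toAffineIsometry.toContinuousAffineMap.hasFDerivAt.comp_hasDerivAt t (h.hasDerivAt_curve t)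
  hasDerivAt_tangent t := by
    simpa using T.linearIsometryEquiv.toContinuousLinearEquiv.hasFDerivAt.comp_hasDerivAt t
      (h.hasDerivAt_tangent t)
  hasDerivAt_normal t := by
    simpa using T.linearIsometryEquiv.toContinuousLinearEquiv.hasFDerivAt.comp_hasDerivAt t
      (h.hasDerivAt_normal t)

/-- Differentiating `γ' = σ' (γ₀' ∘ σ)` and projecting on `γ'` shows that `σ'' = 0`. -/
theorem abs_curvature_eq {γ₀ e₀ n₀ b₀ : ℝ → E} {κ₀ τ₀ σ : ℝ → ℝ} {t : ℝ}
    (h : HasFrenetFrame γ e n b κ τ) (h₀ : HasFrenetFrame γ₀ e₀ n₀ b₀ κ₀ τ₀)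
    (hσ : ∀ᶠ s in 𝓝 t, DifferentiableAt ℝ σ s) (heq : ∀ᶠ s in 𝓝 t, γ s = γ₀ (σ s)) :
    |κ t| = |κ₀ (σ t)| := by
  set u : ℝ → ℝ := fun s ↦ ⟪e₀ (σ s), e s⟫
  have hu : ∀ᶠ s in 𝓝 t, u s = deriv σ s ∧ e s = u s • e₀ (σ s) := by
    filter_upwards [hσ, heq.eventually_nhds] with s hσs heqs
    have he : e s = deriv σ s • e₀ (σ s) := (h.hasDerivAt_curve s).unique
      (((h₀.hasDerivAt_curve (σ s)).scomp s hσs.hasDerivAt).congr_of_eventuallyEq heqs)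
    have hus : u s = deriv σ s := by
      simp only [u, he, real_inner_smul_right, h₀.inner_tangent_self, mul_one]
    exact ⟨hus, hus ▸ he⟩
  obtain ⟨hut, het⟩ := hu.self_of_nhds
  have u_mul_self : u t * u t = 1 := by
    have := h.inner_tangent_self t
    rwa [het, real_inner_smul_left, real_inner_smul_right, h₀.inner_tangent_self, mul_one] at this
  have he₀σ : HasDerivAt (e₀ ∘ σ) (u t • κ₀ (σ t) • n₀ (σ t)) t :=
    hut ▸ (h₀.hasDerivAt_tangent (σ t)).scomp t hσ.self_of_nhds.hasDerivAt
  have deriv_u : HasDerivAt u 0 t := by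
    have e₀_eq : e₀ (σ t) = u t • e t := by rw [het, smul_smul, u_mul_self, one_smul]
    have normal_terms : ⟪e₀ (σ t), κ t • n t⟫ + ⟪u t • κ₀ (σ t) • n₀ (σ t), e t⟫ = 0 := by
      rw [real_inner_smul_right, e₀_eq, real_inner_smul_left, h.inner_tangent_normal, het,
        real_inner_comm]
      simp only [real_inner_smul_left, real_inner_smul_right, h₀.inner_tangent_normal, mul_zero,
        add_zero]
    exact normal_terms ▸ he₀σ.inner ℝ (h.hasDerivAt_tangent t)
  have curvature_vectors : κ t • n t = κ₀ (σ t) • n₀ (σ t) := by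
    have := (h.hasDerivAt_tangent t).unique
      ((deriv_u.smul he₀σ).congr_of_eventuallyEq (hu.mono fun s hs ↦ hs.2))
    rwa [zero_smul, add_zero, smul_smul, u_mul_self, one_smul] at this
  simpa only [norm_smul, norm_normal h, norm_normal h₀, norm_eq_abs, mul_one]
    using congrArg norm curvature_vectors

theorem affineIsometryEquiv_eq_refl (h : HasFrenetFrame γ e n b κ τ)
    (hE : Module.finrank ℝ E = 3) {t : ℝ} (hκ : ∀ᶠ s in 𝓝 t, κ s ≠ 0) (hτ : τ t ≠ 0)
    {T : E ≃ᵃⁱ[ℝ] E} (hT : ∀ᶠ s in 𝓝 t, T (γ s) = γ s) : T = AffineIsometryEquiv.refl ℝ E := by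
  set A := T.linearIsometryEquiv
  have hA (x : E) : HasFDerivAt A (A.toContinuousLinearEquiv : E →L[ℝ] E) x :=
    A.toContinuousLinearEquiv.hasFDerivAt
  have fixes_tangent : ∀ᶠ s in 𝓝 t, A (e s) = e s := hT.eventually_nhds.mono fun s hs ↦
    apply_eq_of_hasDerivAt_of_eventually_fixed (h.hasDerivAt_curve s)
      T.toAffineIsometry.toContinuousAffineMap.hasFDerivAt hs
  have fixes_normal : ∀ᶠ s in 𝓝 t, A (n s) = n s := by
    filter_upwards [fixes_tangent.eventually_nhds, hκ] with s hs hκs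
    have := apply_eq_of_hasDerivAt_of_eventually_fixed (h.hasDerivAt_tangent s) (hA _) hs
    exact smul_right_injective E hκs (by simpa using this)
  have fixes_binormal : A (b t) = b t := by
    have := apply_eq_of_hasDerivAt_of_eventually_fixed (h.hasDerivAt_normal t) (hA _) fixes_normal
    refine smul_right_injective E hτ ?_
    simpa [fixes_tangent.self_of_nhds] using this
  have linear_eq : A.toLinearEquiv.toLinearMap = LinearMap.id := by
    refine (basisOfLinearIndependentOfCardEqFinrank (h.orthonormal t).linearIndependent
      (by simp [hE])).ext fun i ↦ ?_
    fin_cases i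
    · simpa using fixes_tangent.self_of_nhds
    · simpa using fixes_normal.self_of_nhds
    · simpa using fixes_binormal
  ext x
  calc T x = T ((x - γ t) +ᵥ γ t) := by simp
    _ = x := by
      rw [T.map_vadd, hT.self_of_nhds]
      simpa using congrArg (· + γ t) (LinearMap.congr_fun linear_eq (x - γ t))

end HasFrenetFrame

variable {e n b X Y : E}

theorem linearIndependent_of_opposite_slopes {k : ℝ} (h : Orthonormal ℝ ![e, n, b]) (hk : k ≠ 0)
    (hX : ⟪X, b⟫ = k * ⟪X, n⟫) (hY : ⟪Y, b⟫ = -k * ⟪Y, n⟫) (hXn : ⟪X, n⟫ ≠ 0)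
    (hYn : ⟪Y, n⟫ ≠ 0) : LinearIndependent ℝ ![e, X, Y] := by
  have hen : ⟪e, n⟫ = 0 := h.2 (show (0 : Fin 3) ≠ 1 by decide)
  have heb : ⟪e, b⟫ = 0 := h.2 (show (0 : Fin 3) ≠ 2 by decide)
  have he : e ≠ 0 := h.ne_zero 0
  refine Fintype.linearIndependent_iff.2 fun g hg ↦ ?_
  have hg : g 0 • e + g 1 • X + g 2 • Y = 0 := by simpa [Fin.sum_univ_three] using hg
  have along_n : g 1 * ⟪X, n⟫ + g 2 * ⟪Y, n⟫ = 0 := by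
    simpa [inner_add_left, real_inner_smul_left, hen] using congrArg (⟪·, n⟫) hg
  have along_b : k * (g 1 * ⟪X, n⟫ - g 2 * ⟪Y, n⟫) = 0 := by
    have : ⟪g 0 • e + g 1 • X + g 2 • Y, b⟫ = ⟪(0 : E), b⟫ := by rw [hg]
    simp only [inner_add_left, real_inner_smul_left, inner_zero_left, heb, hX, hY] at this
    linear_combination this
  have difference := (mul_eq_zero.1 along_b).resolve_left hk
  have g1 : g 1 = 0 := (mul_eq_zero.1 (show g 1 * ⟪X, n⟫ = 0 by linarith)).resolve_right hXn
  have g2 : g 2 = 0 := (mul_eq_zero.1 (show g 2 * ⟪Y, n⟫ = 0 by linarith)).resolve_right hYn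
  have g0 : g 0 = 0 := (smul_eq_zero.1 (by simpa [g1, g2] using hg)).resolve_right he
  intro i
  fin_cases i <;> assumption

theorem slope_eq_of_mem_quadrantBoundary {X' : E} {k k' r : ℝ} {q : ℝ × ℝ}
    (h : Orthonormal ℝ ![e, n, b]) (hq : q ∈ quadrantBoundary)
    (heq : X' = r • e + q.1 • X + q.2 • Y) (hX' : ⟪X', b⟫ = k' * ⟪X', n⟫)
    (hX : ⟪X, b⟫ = k * ⟪X, n⟫) (hXn' : 0 < ⟪X', n⟫) (hYn : ⟪Y, n⟫ ≤ 0) : k' = k := by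
  have hen : ⟪e, n⟫ = 0 := h.2 (show (0 : Fin 3) ≠ 1 by decide)
  have heb : ⟪e, b⟫ = 0 := h.2 (show (0 : Fin 3) ≠ 2 by decide)
  obtain ⟨-, hq2, hq12⟩ := hq
  have along_n : ⟪X', n⟫ = q.1 * ⟪X, n⟫ + q.2 * ⟪Y, n⟫ := by
    simp only [heq, inner_add_left, real_inner_smul_left, hen, mul_zero, zero_add]
  have q1 : q.1 ≠ 0 := by
    intro q1
    rw [q1, zero_mul, zero_add] at along_n
    exact (hXn'.trans_eq along_n).not_ge (mul_nonpos_of_nonneg_of_nonpos hq2 hYn)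
  have q2 : q.2 = 0 := (mul_eq_zero.1 hq12).resolve_left q1
  have along_b : ⟪X', b⟫ = k * ⟪X', n⟫ := by
    simp only [heq, q2, zero_smul, add_zero, inner_add_left, real_inner_smul_left, hen, heb, hX]
    ring
  exact mul_right_cancel₀ hXn'.ne' (hX'.symm.trans along_b)

end FrenetFrame

section CurvedFolding

/-- The second angular function `β ∈ (0, π)` of the developable strip along `γ` with first angular
function `a`, determined by `cot β = (a' + τ) / (κ sin a)`. The dual strip is obtained from
`-a`, since negating numerator and denominator leaves the dual cotangent. -/
def secondAngle (γ : ℝ → E3) (a : ℝ → ℝ) (t : ℝ) : ℝ :=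
  π / 2 - arctan ((deriv a t + tors γ t) / (curv γ t * sin (a t)))

/-- The normalized ruling field of the developable strip along `γ` with first angular function
`a`. -/
def ruling (γ : ℝ → E3) (a : ℝ → ℝ) (t : ℝ) : E3 :=
  cos (secondAngle γ a t) • tang γ t +
    sin (secondAngle γ a t) • (cos (a t) • pnorm γ t + sin (a t) • binorm γ t)

/-- The curved folding of width `ε` along `γ` made of the developable strip with first angular
function `a` and its dual, that is, the image of the origami map `φ`; the origami map `ψ` is
obtained from `-a`. -/
def curvedFolding (I : Set ℝ) (γ : ℝ → E3) (a : ℝ → ℝ) (ε : ℝ) : Set E3 :=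
  foldedStrip I γ (ruling γ a) (-ruling γ (-a)) ε

variable {γ : ℝ → E3} {a : ℝ → ℝ} {I : Set ℝ}

theorem eq_pi_div_two_sub_arctan {β d q : ℝ} (h0 : 0 < β) (hπ : β < π) (hq : q ≠ 0)
    (h : cos β * q = d * sin β) : β = π / 2 - arctan (d / q) := by
  have hsin : sin β ≠ 0 := (sin_pos_of_pos_of_lt_pi h0 hπ).ne'
  have htan : tan (π / 2 - β) = d / q := by
    rw [tan_eq_sin_div_cos, sin_pi_div_two_sub, cos_pi_div_two_sub, div_eq_div_iff hsin hq, h]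
  rw [← htan, arctan_tan (by linarith) (by linarith), sub_sub_cancel]

theorem sin_secondAngle_pos (γ : ℝ → E3) (a : ℝ → ℝ) (t : ℝ) : 0 < sin (secondAngle γ a t) := by
  rw [secondAngle, sin_pi_div_two_sub]
  exact cos_arctan_pos _

theorem eqOn_ruling {β : ℝ → ℝ} {ξ : ℝ → E3} (hq : ∀ t ∈ I, curv γ t * sin (a t) ≠ 0)
    (hβ : ∀ t ∈ I, 0 < β t ∧ β t < π ∧
      cos (β t) * (curv γ t * sin (a t)) = (deriv a t + tors γ t) * sin (β t))
    (hξ : ∀ t, ξ t = cos (β t) • tang γ t +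
      sin (β t) • (cos (a t) • pnorm γ t + sin (a t) • binorm γ t)) :
    EqOn ξ (ruling γ a) I := fun t ht ↦ by
  obtain ⟨h0, hπ, h⟩ := hβ t ht
  rw [hξ, eq_pi_div_two_sub_arctan h0 hπ (hq t ht) h]
  rfl

theorem eqOn_ruling_neg {β : ℝ → ℝ} {ξ : ℝ → E3} (hq : ∀ t ∈ I, curv γ t * sin (a t) ≠ 0)
    (hβ : ∀ t ∈ I, 0 < β t ∧ β t < π ∧
      cos (β t) * (curv γ t * sin (a t)) = (deriv a t - tors γ t) * sin (β t))
    (hξ : ∀ t, ξ t = cos (β t) • tang γ t +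
      sin (β t) • (cos (a t) • pnorm γ t - sin (a t) • binorm γ t)) :
    EqOn ξ (ruling γ (-a)) I := by
  refine eqOn_ruling (β := β) (fun t ht ↦ by simpa using hq t ht) (fun t ht ↦ ?_) fun t ↦ ?_
  · obtain ⟨h0, hπ, h⟩ := hβ t ht
    refine ⟨h0, hπ, ?_⟩
    rw [deriv.neg, Pi.neg_apply, sin_neg]
    linear_combination -h
  · simp only [hξ, Pi.neg_apply, cos_neg, sin_neg, neg_smul, sub_eq_add_neg]

theorem image_origami_eq_curvedFolding {ξ ξ' : ℝ → E3} {Φ : ℝ × ℝ → E3} (ε : ℝ)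
    (hξ : EqOn ξ (ruling γ a) I) (hξ' : EqOn ξ' (ruling γ (-a)) I)
    (hΦ : ∀ t v, Φ (t, v) = if 0 ≤ v then γ t + v • ξ t else γ t + v • ξ' t) :
    Φ '' (I ×ˢ Ioo (-ε) ε) = curvedFolding I γ a ε := by
  rw [image_origami_eq_foldedStrip hΦ]
  exact foldedStrip_congr hξ (fun t ht ↦ congrArg Neg.neg (hξ' ht)) ε

theorem image_dual_origami_eq_curvedFolding {ξ ξ' : ℝ → E3} {Φ : ℝ × ℝ → E3} (ε : ℝ)
    (hξ : EqOn ξ (ruling γ a) I) (hξ' : EqOn ξ' (ruling γ (-a)) I)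
    (hΦ : ∀ t v, Φ (t, v) = if 0 ≤ v then γ t + v • ξ' t else γ t + v • ξ t) :
    Φ '' (I ×ˢ Ioo (-ε) ε) = curvedFolding I γ (-a) ε :=
  image_origami_eq_curvedFolding ε hξ' ((neg_neg a).symm ▸ hξ) hΦ

section Reversal

theorem cross3_neg_left (u v : E3) : cross3 (-u) v = -cross3 u v := by
  ext i
  fin_cases i <;> simp [cross3] <;> ring

variable (γ : ℝ → E3) (a : ℝ → ℝ) (m t : ℝ)

theorem tang_comp_const_sub : tang (fun s ↦ γ (m - s)) t = -tang γ (m - t) :=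
  deriv_comp_const_sub γ m t

theorem deriv_deriv_comp_const_sub :
    deriv (deriv fun s ↦ γ (m - s)) t = deriv (deriv γ) (m - t) := by
  rw [show deriv (fun s ↦ γ (m - s)) = fun s ↦ -deriv γ (m - s) from
    funext (deriv_comp_const_sub γ m), deriv.fun_neg, deriv_comp_const_sub, neg_neg]

theorem curv_comp_const_sub : curv (fun s ↦ γ (m - s)) t = curv γ (m - t) := by
  rw [curv, deriv_deriv_comp_const_sub, curv]

theorem pnorm_comp_const_sub : pnorm (fun s ↦ γ (m - s)) t = pnorm γ (m - t) := by
  rw [pnorm, curv_comp_const_sub, deriv_deriv_comp_const_sub, pnorm]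

theorem binorm_comp_const_sub : binorm (fun s ↦ γ (m - s)) t = -binorm γ (m - t) := by
  rw [binorm, tang_comp_const_sub, pnorm_comp_const_sub, cross3_neg_left, binorm]

theorem tors_comp_const_sub : tors (fun s ↦ γ (m - s)) t = tors γ (m - t) := by
  rw [tors, funext (pnorm_comp_const_sub γ m), deriv_comp_const_sub, binorm_comp_const_sub,
    inner_neg_neg, tors]

theorem ruling_comp_const_sub :
    ruling (fun s ↦ γ (m - s)) a t = ruling γ (fun s ↦ -a (m - s)) (m - t) := by
  have hβ : secondAngle γ (fun s ↦ -a (m - s)) (m - t) =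
      π - secondAngle (fun s ↦ γ (m - s)) a t := by
    simp only [secondAngle, deriv.fun_neg, deriv_comp_const_sub, tors_comp_const_sub,
      curv_comp_const_sub, sub_sub_cancel, neg_neg, sin_neg, mul_neg, div_neg, arctan_neg]
    ring
  simp only [ruling, hβ, cos_pi_sub, sin_pi_sub, tang_comp_const_sub, pnorm_comp_const_sub,
    binorm_comp_const_sub, sub_sub_cancel, cos_neg, sin_neg, smul_neg, neg_smul]

theorem curvedFolding_comp_const_sub {m : ℝ} (hI : (fun t ↦ m - t) '' I = I) (ε : ℝ) :
    curvedFolding I (fun s ↦ γ (m - s)) a ε = curvedFolding I γ (fun s ↦ -a (m - s)) ε := by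
  refine (foldedStrip_congr (fun t _ ↦ ruling_comp_const_sub γ a m t)
    (fun t _ ↦ congrArg Neg.neg (ruling_comp_const_sub γ (-a) m t)) ε).trans ?_
  exact foldedStrip_comp (X := ruling γ fun s ↦ -a (m - s))
    (Y := -ruling γ (-fun s ↦ -a (m - s))) hI ε

end Reversal

theorem contDiff_cross3 {n : ℕ∞ω} {u v : ℝ → E3} (hu : ContDiff ℝ n u) (hv : ContDiff ℝ n v) :
    ContDiff ℝ n fun t ↦ cross3 (u t) (v t) := by
  have hu := contDiff_euclidean.1 hu
  have hv := contDiff_euclidean.1 hv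
  refine contDiff_euclidean.2 fun i ↦ ?_
  fin_cases i
  · exact ((hu 1).mul (hv 2)).sub ((hu 2).mul (hv 1))
  · exact ((hu 2).mul (hv 0)).sub ((hu 0).mul (hv 2))
  · exact ((hu 0).mul (hv 1)).sub ((hu 1).mul (hv 0))

/-- A unit-speed space curve of class `C⁴` with nonvanishing curvature. Its Frenet equations,
a consequence of these properties, are bundled with it. -/
structure IsFrenetCurve (γ : ℝ → E3) : Prop where
  contDiff : ContDiff ℝ 4 γ
  curv_ne_zero : ∀ t, curv γ t ≠ 0
  hasFrenetFrame : HasFrenetFrame γ (tang γ) (pnorm γ) (binorm γ) (curv γ) (tors γ)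

/-- An admissible first angular function on `I`; negative values describe dual strips. -/
structure IsAngleFunction (I : Set ℝ) (a : ℝ → ℝ) : Prop where
  contDiffAt : ∀ t ∈ I, ContDiffAt ℝ 2 a t
  ne_zero : ∀ t ∈ I, a t ≠ 0
  abs_lt_pi_div_two : ∀ t ∈ I, |a t| < π / 2

namespace IsAngleFunction

theorem neg (ha : IsAngleFunction I a) : IsAngleFunction I (-a) where
  contDiffAt t ht := (ha.contDiffAt t ht).neg
  ne_zero t ht := neg_ne_zero.2 (ha.ne_zero t ht)
  abs_lt_pi_div_two t ht := by simpa using ha.abs_lt_pi_div_two t ht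

theorem comp_const_sub (ha : IsAngleFunction I a) {m : ℝ} (hI : MapsTo (fun t ↦ m - t) I I) :
    IsAngleFunction I fun t ↦ a (m - t) where
  contDiffAt t ht := (ha.contDiffAt _ (hI ht)).comp t (by fun_prop)
  ne_zero t ht := ha.ne_zero _ (hI ht)
  abs_lt_pi_div_two t ht := ha.abs_lt_pi_div_two _ (hI ht)

theorem mono (ha : IsAngleFunction I a) {J : Set ℝ} (hJ : J ⊆ I) : IsAngleFunction J a where
  contDiffAt t ht := ha.contDiffAt t (hJ ht)
  ne_zero t ht := ha.ne_zero t (hJ ht)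
  abs_lt_pi_div_two t ht := ha.abs_lt_pi_div_two t (hJ ht)

theorem sin_ne_zero (ha : IsAngleFunction I a) {t : ℝ} (ht : t ∈ I) : sin (a t) ≠ 0 := by
  have := abs_lt.1 (ha.abs_lt_pi_div_two t ht)
  exact fun h ↦ ha.ne_zero t ht ((sin_eq_zero_iff_of_lt_of_lt (by linarith [pi_pos])
    (by linarith [pi_pos])).1 h)

theorem cos_pos (ha : IsAngleFunction I a) {t : ℝ} (ht : t ∈ I) : 0 < cos (a t) :=
  cos_pos_of_mem_Ioo (abs_lt.1 (ha.abs_lt_pi_div_two t ht))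

end IsAngleFunction

namespace IsFrenetCurve

theorem contDiff_tang (hγ : IsFrenetCurve γ) : ContDiff ℝ 3 (tang γ) :=
  ContDiff.deriv' (n := 3) hγ.contDiff

theorem contDiff_deriv_tang (hγ : IsFrenetCurve γ) : ContDiff ℝ 2 (deriv (tang γ)) :=
  ContDiff.deriv' (n := 2) hγ.contDiff_tang

theorem contDiff_curv (hγ : IsFrenetCurve γ) : ContDiff ℝ 2 (curv γ) :=
  hγ.contDiff_deriv_tang.norm ℝ fun t ↦ norm_ne_zero_iff.1 (hγ.curv_ne_zero t)

theorem contDiff_pnorm (hγ : IsFrenetCurve γ) : ContDiff ℝ 2 (pnorm γ) :=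
  (hγ.contDiff_curv.inv hγ.curv_ne_zero).smul hγ.contDiff_deriv_tang

theorem contDiff_binorm (hγ : IsFrenetCurve γ) : ContDiff ℝ 2 (binorm γ) := by
  have he : ContDiff ℝ 2 (tang γ) := hγ.contDiff_tang.of_le (by norm_num)
  exact contDiff_cross3 he hγ.contDiff_pnorm

theorem contDiff_tors (hγ : IsFrenetCurve γ) : ContDiff ℝ 1 (tors γ) :=
  (ContDiff.deriv' (n := 1) hγ.contDiff_pnorm).inner ℝ (hγ.contDiff_binorm.of_le (by norm_num))

theorem contDiffAt_ruling (hγ : IsFrenetCurve γ) (ha : IsAngleFunction I a) {t : ℝ} (ht : t ∈ I) :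
    ContDiffAt ℝ 1 (ruling γ a) t := by
  have ha1 : ContDiffAt ℝ 1 a t := (ha.contDiffAt t ht).of_le (by norm_num)
  have ha' : ContDiffAt ℝ 1 (deriv a) t := (ha.contDiffAt t ht).derivWithin (by norm_num)
  have hκ : ContDiffAt ℝ 1 (curv γ) t := (hγ.contDiff_curv.of_le (by norm_num)).contDiffAt
  have hβ : ContDiffAt ℝ 1 (secondAngle γ a) t :=
    contDiffAt_const.sub (((ha'.add hγ.contDiff_tors.contDiffAt).div (hκ.mul ha1.sin)
      (mul_ne_zero (hγ.curv_ne_zero t) (ha.sin_ne_zero ht))).arctan)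
  have he : ContDiffAt ℝ 1 (tang γ) t := (hγ.contDiff_tang.of_le (by norm_num)).contDiffAt
  have hn : ContDiffAt ℝ 1 (pnorm γ) t := (hγ.contDiff_pnorm.of_le (by norm_num)).contDiffAt
  have hb : ContDiffAt ℝ 1 (binorm γ) t := (hγ.contDiff_binorm.of_le (by norm_num)).contDiffAt
  exact (hβ.cos.smul he).add (hβ.sin.smul ((ha1.cos.smul hn).add (ha1.sin.smul hb)))

theorem inner_ruling_pnorm (hγ : IsFrenetCurve γ) (a : ℝ → ℝ) (t : ℝ) :
    ⟪ruling γ a t, pnorm γ t⟫ = sin (secondAngle γ a t) * cos (a t) := by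
  have h := hγ.hasFrenetFrame.orthonormal t
  have hen : ⟪tang γ t, pnorm γ t⟫ = 0 := h.2 (show (0 : Fin 3) ≠ 1 by decide)
  have hnn : ⟪pnorm γ t, pnorm γ t⟫ = 1 := inner_self_eq_one_of_norm_eq_one (h.1 1)
  have hbn : ⟪binorm γ t, pnorm γ t⟫ = 0 := h.2 (show (2 : Fin 3) ≠ 1 by decide)
  simp only [ruling, inner_add_left, real_inner_smul_left, hen, hnn, hbn]
  ring

theorem inner_ruling_binorm (hγ : IsFrenetCurve γ) (a : ℝ → ℝ) (t : ℝ) :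
    ⟪ruling γ a t, binorm γ t⟫ = sin (secondAngle γ a t) * sin (a t) := by
  have h := hγ.hasFrenetFrame.orthonormal t
  have heb : ⟪tang γ t, binorm γ t⟫ = 0 := h.2 (show (0 : Fin 3) ≠ 2 by decide)
  have hnb : ⟪pnorm γ t, binorm γ t⟫ = 0 := h.2 (show (1 : Fin 3) ≠ 2 by decide)
  have hbb : ⟪binorm γ t, binorm γ t⟫ = 1 := inner_self_eq_one_of_norm_eq_one (h.1 2)
  simp only [ruling, inner_add_left, real_inner_smul_left, heb, hnb, hbb]
  ring

theorem inner_ruling_pnorm_pos (hγ : IsFrenetCurve γ) (ha : IsAngleFunction I a) {t : ℝ}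
    (ht : t ∈ I) : 0 < ⟪ruling γ a t, pnorm γ t⟫ := by
  rw [hγ.inner_ruling_pnorm]
  exact mul_pos (sin_secondAngle_pos γ a t) (ha.cos_pos ht)

theorem inner_ruling_binorm_eq_tan_mul (hγ : IsFrenetCurve γ) (ha : IsAngleFunction I a) {t : ℝ}
    (ht : t ∈ I) : ⟪ruling γ a t, binorm γ t⟫ = tan (a t) * ⟪ruling γ a t, pnorm γ t⟫ := by
  rw [hγ.inner_ruling_pnorm, hγ.inner_ruling_binorm, mul_left_comm, tan_mul_cos (ha.cos_pos ht).ne']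

theorem isFold_ruling (hγ : IsFrenetCurve γ) (hinj : InjOn γ I) (ha : IsAngleFunction I a) :
    IsFold I γ (ruling γ a) (-ruling γ (-a)) where
  contDiffAt_crease _ _ := (hγ.contDiff.of_le (by norm_num)).contDiffAt
  contDiffAt_left _ ht := hγ.contDiffAt_ruling ha ht
  contDiffAt_right _ ht := (hγ.contDiffAt_ruling ha.neg ht).neg
  injOn_crease := hinj
  linearIndependent t ht := by
    refine linearIndependent_of_opposite_slopes (hγ.hasFrenetFrame.orthonormal t) (k := tan (a t))
      ?_ (hγ.inner_ruling_binorm_eq_tan_mul ha ht) ?_ (hγ.inner_ruling_pnorm_pos ha ht).ne' ?_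
    · rw [tan_eq_sin_div_cos]
      exact div_ne_zero (ha.sin_ne_zero ht) (ha.cos_pos ht).ne'
    · simp [inner_neg_left, hγ.inner_ruling_binorm_eq_tan_mul ha.neg ht, tan_neg]
    · simpa [inner_neg_left] using (hγ.inner_ruling_pnorm_pos ha.neg ht).ne'

theorem isometry_eq_refl_of_image_subset (hγ : IsFrenetCurve γ) (hκ : InjOn (curv γ) I)
    {ℓ : E3 → ℝ} (hℓ : Differentiable ℝ ℓ) (hleft : Function.LeftInverse ℓ γ)
    (hτ : ∃ t ∈ interior I, tors γ t ≠ 0) {T : E3 ≃ᵃⁱ[ℝ] E3}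
    (hT : ∀ t ∈ interior I, T (γ t) ∈ γ '' I) : T = AffineIsometryEquiv.refl ℝ E3 := by
  have reparam : ∀ s ∈ interior I, ℓ (T (γ s)) ∈ I ∧ T (γ s) = γ (ℓ (T (γ s))) := by
    intro s hs
    obtain ⟨r, hr, hrs⟩ := hT s hs
    rw [← hrs, hleft r]
    exact ⟨hr, rfl⟩
  have fixes_crease : ∀ t ∈ interior I, T (γ t) = γ t := by
    intro t ht
    have near_t : ∀ᶠ s in 𝓝 t, s ∈ interior I := isOpen_interior.mem_nhds ht
    have curv_eq : |curv γ t| = |curv γ (ℓ (T (γ t)))| :=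
      (hγ.hasFrenetFrame.map T).abs_curvature_eq hγ.hasFrenetFrame (σ := fun s ↦ ℓ (T (γ s)))
        (Eventually.of_forall fun s ↦ hℓ.differentiableAt.comp s
          ((hγ.hasFrenetFrame.map T).hasDerivAt_curve s).differentiableAt)
        (near_t.mono fun s hs ↦ (reparam s hs).2)
    have curv_nonneg (s : ℝ) : 0 ≤ curv γ s := norm_nonneg _
    rw [abs_of_nonneg (curv_nonneg _), abs_of_nonneg (curv_nonneg _)] at curv_eq
    rw [(reparam t ht).2, ← hκ (interior_subset ht) (reparam t ht).1 curv_eq]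
  obtain ⟨t, ht, hτt⟩ := hτ
  exact hγ.hasFrenetFrame.affineIsometryEquiv_eq_refl finrank_euclideanSpace_fin
    (Eventually.of_forall hγ.curv_ne_zero) hτt
    (Filter.mem_of_superset (isOpen_interior.mem_nhds ht) fixes_crease)

theorem eventually_angle_eq_of_image_subset (hγ : IsFrenetCurve γ) (hI : IsCompact I)
    (hκ : InjOn (curv γ) I) {ℓ : E3 → ℝ} (hℓ : Differentiable ℝ ℓ)
    (hleft : Function.LeftInverse ℓ γ) (hτ : ∃ t ∈ interior I, tors γ t ≠ 0)
    (ha : IsAngleFunction I a) :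
    ∀ᶠ ε in 𝓝[>] 0, ∀ δ > 0, ∀ a', IsAngleFunction I a' → ∀ T : E3 ≃ᵢ E3,
      T '' curvedFolding I γ a' δ ⊆ curvedFolding I γ a ε → EqOn a' a (interior I) := by
  have fold {a : ℝ → ℝ} (ha : IsAngleFunction I a) := hγ.isFold_ruling hleft.injective.injOn ha
  obtain ⟨ε₁, hε₁, C, hanti⟩ := (fold ha).exists_antilipschitzWith hI
  filter_upwards [Ioc_mem_nhdsGT hε₁] with ε hε δ hδ a' ha' T hT t ht
  have hT : T '' curvedFolding I γ a' δ ⊆ curvedFolding I γ a ε₁ :=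
    hT.trans (foldedStrip_mono I _ _ _ hε.2)
  have hT_refl : T.toRealAffineIsometryEquiv = AffineIsometryEquiv.refl ℝ E3 :=
    hγ.isometry_eq_refl_of_image_subset hκ hℓ hleft hτ fun t ht ↦
      (fold ha').mem_crease_of_image_subset (fold ha) hanti hδ T.toRealAffineIsometryEquiv
        (by simpa using! hT) ht
  have hsub : curvedFolding I γ a' δ ⊆ curvedFolding I γ a ε₁ := by
    have : ⇑T = id := by simpa using congrArg DFunLike.coe hT_refl
    simpa [this] using hT
  have htI := interior_subset ht
  obtain ⟨r, q, hq, heq⟩ :=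
    (fold ha').exists_left_eq_of_foldedStrip_subset (fold ha) hanti hε₁ hδ hsub ht
  have tan_eq : tan (a' t) = tan (a t) :=
    slope_eq_of_mem_quadrantBoundary (hγ.hasFrenetFrame.orthonormal t) hq heq
      (hγ.inner_ruling_binorm_eq_tan_mul ha' htI) (hγ.inner_ruling_binorm_eq_tan_mul ha htI)
      (hγ.inner_ruling_pnorm_pos ha' htI)
      (by simpa [inner_neg_left] using (hγ.inner_ruling_pnorm_pos ha.neg htI).le)
  exact injOn_tan (abs_lt.1 (ha'.abs_lt_pi_div_two t htI))
    (abs_lt.1 (ha.abs_lt_pi_div_two t htI)) tan_eq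

end IsFrenetCurve

end CurvedFolding

section FrenetData

namespace HasFrenetFrame

variable {γ e n b : ℝ → E3} {κ τ : ℝ → ℝ}

theorem tang_eq (h : HasFrenetFrame γ e n b κ τ) : tang γ = e :=
  funext fun t ↦ (h.hasDerivAt_curve t).deriv

theorem deriv_deriv_eq (h : HasFrenetFrame γ e n b κ τ) (t : ℝ) :
    deriv (deriv γ) t = κ t • n t := by
  rw [show deriv γ = e from h.tang_eq, (h.hasDerivAt_tangent t).deriv]

theorem curv_eq (h : HasFrenetFrame γ e n b κ τ) (hκ : ∀ t, 0 < κ t) : curv γ = κ :=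
  funext fun t ↦ by
    rw [curv, h.deriv_deriv_eq, norm_smul, h.norm_normal, mul_one, norm_of_nonneg (hκ t).le]

theorem pnorm_eq (h : HasFrenetFrame γ e n b κ τ) (hκ : ∀ t, 0 < κ t) : pnorm γ = n :=
  funext fun t ↦ by rw [pnorm, h.curv_eq hκ, h.deriv_deriv_eq, inv_smul_smul₀ (hκ t).ne']

theorem binorm_eq (h : HasFrenetFrame γ e n b κ τ) (hκ : ∀ t, 0 < κ t)
    (hb : ∀ t, cross3 (e t) (n t) = b t) : binorm γ = b :=
  funext fun t ↦ by rw [binorm, h.tang_eq, h.pnorm_eq hκ, hb]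

theorem tors_eq (h : HasFrenetFrame γ e n b κ τ) (hκ : ∀ t, 0 < κ t)
    (hb : ∀ t, cross3 (e t) (n t) = b t) : tors γ = τ :=
  funext fun t ↦ by
    have heb : ⟪e t, b t⟫ = 0 := (h.orthonormal t).2 (show (0 : Fin 3) ≠ 2 by decide)
    have hbb : ⟪b t, b t⟫ = 1 := inner_self_eq_one_of_norm_eq_one ((h.orthonormal t).1 2)
    rw [tors, h.pnorm_eq hκ, h.binorm_eq hκ hb, (h.hasDerivAt_normal t).deriv, inner_add_left,
      real_inner_smul_left, real_inner_smul_left, heb, hbb, mul_zero, mul_one, zero_add]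

theorem isFrenetCurve (h : HasFrenetFrame γ e n b κ τ) (hγ : ContDiff ℝ 4 γ) (hκ : ∀ t, 0 < κ t)
    (hb : ∀ t, cross3 (e t) (n t) = b t) : IsFrenetCurve γ where
  contDiff := hγ
  curv_ne_zero t := by
    rw [h.curv_eq hκ]
    exact (hκ t).ne'
  hasFrenetFrame := by
    rwa [h.tang_eq, h.pnorm_eq hκ, h.binorm_eq hκ hb, h.curv_eq hκ, h.tors_eq hκ hb]

end HasFrenetFrame

theorem hasDerivAt_vec3 {f g h : ℝ → ℝ} {v : E3} {t : ℝ} (hf : HasDerivAt f (v 0) t)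
    (hg : HasDerivAt g (v 1) t) (hh : HasDerivAt h (v 2) t) :
    HasDerivAt (fun s ↦ (!₂[f s, g s, h s] : E3)) v t := by
  have coords : HasDerivAt (fun s ↦ ![f s, g s, h s]) v.ofLp t := by
    refine hasDerivAt_pi.2 fun i ↦ ?_
    fin_cases i <;> assumption
  exact (PiLp.hasFDerivAt_toLp 2 _).comp_hasDerivAt t coords

theorem inner_vec3 (x y z x' y' z' : ℝ) :
    ⟪(!₂[x, y, z] : E3), !₂[x', y', z']⟫ = x * x' + y * y' + z * z' := by
  simp [PiLp.inner_apply, Fin.sum_univ_three, mul_comm]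

theorem orthonormal_vec3 {E : Type*} [NormedAddCommGroup E] [InnerProductSpace ℝ E] {u v w : E}
    (huu : ⟪u, u⟫ = 1) (hvv : ⟪v, v⟫ = 1) (hww : ⟪w, w⟫ = 1) (huv : ⟪u, v⟫ = 0)
    (huw : ⟪u, w⟫ = 0) (hvw : ⟪v, w⟫ = 0) : Orthonormal ℝ ![u, v, w] := by
  have norm_eq {x : E} (h : ⟪x, x⟫ = 1) : ‖x‖ = 1 := by rw [norm_eq_sqrt_real_inner, h, sqrt_one]
  simp [Fin.forall_fin_succ, norm_eq huu, norm_eq hvv, norm_eq hww, huv, huw, hvw]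

end FrenetData

section Crease

/-- The unit tangent of `c₀`. -/
def tangent₀ (t : ℝ) : E3 := !₂[1 / (1 + t ^ 2), √2 * t / (1 + t ^ 2), t ^ 2 / (1 + t ^ 2)]

/-- The principal normal of `c₀`. -/
def normal₀ (t : ℝ) : E3 :=
  !₂[-√2 * t / (1 + t ^ 2), (1 - t ^ 2) / (1 + t ^ 2), √2 * t / (1 + t ^ 2)]

/-- The binormal of `c₀`. -/
def binormal₀ (t : ℝ) : E3 := !₂[t ^ 2 / (1 + t ^ 2), -√2 * t / (1 + t ^ 2), 1 / (1 + t ^ 2)]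

/-- The common value of curvature and torsion of `c₀`. -/
def curvature₀ (t : ℝ) : ℝ := √2 / (1 + t ^ 2)

theorem curvature₀_pos (t : ℝ) : 0 < curvature₀ t := by
  unfold curvature₀
  positivity

theorem hasDerivAt_one_add_sq (t : ℝ) : HasDerivAt (fun s : ℝ ↦ 1 + s ^ 2) (2 * t) t := by
  simpa using (hasDerivAt_pow 2 t).const_add 1

theorem hasDerivAt_c₀ (t : ℝ) : HasDerivAt c₀ (tangent₀ t) t := by
  have hD : 1 + t ^ 2 ≠ 0 := by positivity
  have h2 : √2 ^ 2 = 2 := sq_sqrt zero_le_two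
  refine hasDerivAt_vec3 (hasDerivAt_arctan t)
    ((((hasDerivAt_one_add_sq t).log hD).div_const √2).congr_deriv ?_)
    (((hasDerivAt_id t).sub (hasDerivAt_arctan t)).congr_deriv ?_)
  · change 2 * t / (1 + t ^ 2) / √2 = √2 * t / (1 + t ^ 2)
    field_simp
    linear_combination -t * h2
  · change 1 - 1 / (1 + t ^ 2) = t ^ 2 / (1 + t ^ 2)
    field_simp
    ring

theorem hasDerivAt_tangent₀ (t : ℝ) : HasDerivAt tangent₀ (curvature₀ t • normal₀ t) t := by
  have hD : 1 + t ^ 2 ≠ 0 := by positivity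
  have h2 : √2 ^ 2 = 2 := sq_sqrt zero_le_two
  have hd := hasDerivAt_one_add_sq t
  refine hasDerivAt_vec3 (((hasDerivAt_const t 1).div hd hD).congr_deriv ?_)
    ((((hasDerivAt_id t).const_mul √2).div hd hD).congr_deriv ?_)
    (((hasDerivAt_pow 2 t).div hd hD).congr_deriv ?_)
  · change (0 * (1 + t ^ 2) - 1 * (2 * t)) / (1 + t ^ 2) ^ 2 =
      √2 / (1 + t ^ 2) * (-√2 * t / (1 + t ^ 2))
    field_simp
    linear_combination t * h2
  · change (√2 * 1 * (1 + t ^ 2) - √2 * t * (2 * t)) / (1 + t ^ 2) ^ 2 =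
      √2 / (1 + t ^ 2) * ((1 - t ^ 2) / (1 + t ^ 2))
    field_simp
    ring
  · change ((2 : ℕ) * t ^ 1 * (1 + t ^ 2) - t ^ 2 * (2 * t)) / (1 + t ^ 2) ^ 2 =
      √2 / (1 + t ^ 2) * (√2 * t / (1 + t ^ 2))
    field_simp
    push_cast
    linear_combination -t * h2

theorem hasDerivAt_normal₀ (t : ℝ) :
    HasDerivAt normal₀ (-curvature₀ t • tangent₀ t + curvature₀ t • binormal₀ t) t := by
  have hD : 1 + t ^ 2 ≠ 0 := by positivity
  have h2 : √2 ^ 2 = 2 := sq_sqrt zero_le_two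
  have hd := hasDerivAt_one_add_sq t
  refine hasDerivAt_vec3 ((((hasDerivAt_id t).const_mul (-√2)).div hd hD).congr_deriv ?_)
    ((((hasDerivAt_pow 2 t).const_sub 1).div hd hD).congr_deriv ?_)
    ((((hasDerivAt_id t).const_mul √2).div hd hD).congr_deriv ?_)
  · change (-√2 * 1 * (1 + t ^ 2) - -√2 * t * (2 * t)) / (1 + t ^ 2) ^ 2 =
      -(√2 / (1 + t ^ 2)) * (1 / (1 + t ^ 2)) + √2 / (1 + t ^ 2) * (t ^ 2 / (1 + t ^ 2))
    field_simp
    ring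
  · change (-((2 : ℕ) * t ^ 1) * (1 + t ^ 2) - (1 - t ^ 2) * (2 * t)) / (1 + t ^ 2) ^ 2 =
      -(√2 / (1 + t ^ 2)) * (√2 * t / (1 + t ^ 2)) +
        √2 / (1 + t ^ 2) * (-√2 * t / (1 + t ^ 2))
    field_simp
    push_cast
    linear_combination 2 * t * h2
  · change (√2 * 1 * (1 + t ^ 2) - √2 * t * (2 * t)) / (1 + t ^ 2) ^ 2 =
      -(√2 / (1 + t ^ 2)) * (t ^ 2 / (1 + t ^ 2)) + √2 / (1 + t ^ 2) * (1 / (1 + t ^ 2))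
    field_simp
    ring

theorem orthonormal_frame₀ (t : ℝ) : Orthonormal ℝ ![tangent₀ t, normal₀ t, binormal₀ t] := by
  have h2 : √2 ^ 2 = 2 := sq_sqrt zero_le_two
  apply orthonormal_vec3 <;> simp only [tangent₀, normal₀, binormal₀, inner_vec3] <;>
    field_simp
  · linear_combination t ^ 2 * h2
  · linear_combination 2 * t ^ 2 * h2
  · linear_combination t ^ 2 * h2
  · ring
  · linear_combination -t ^ 2 * h2
  · ring

theorem cross3_tangent₀_normal₀ (t : ℝ) : cross3 (tangent₀ t) (normal₀ t) = binormal₀ t := by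
  have h2 : √2 ^ 2 = 2 := sq_sqrt zero_le_two
  ext i
  fin_cases i
  · change √2 * t / (1 + t ^ 2) * (√2 * t / (1 + t ^ 2)) -
      t ^ 2 / (1 + t ^ 2) * ((1 - t ^ 2) / (1 + t ^ 2)) = t ^ 2 / (1 + t ^ 2)
    field_simp
    linear_combination t ^ 2 * h2
  · change t ^ 2 / (1 + t ^ 2) * (-√2 * t / (1 + t ^ 2)) -
      1 / (1 + t ^ 2) * (√2 * t / (1 + t ^ 2)) = -√2 * t / (1 + t ^ 2)
    field_simp
    ring
  · change 1 / (1 + t ^ 2) * ((1 - t ^ 2) / (1 + t ^ 2)) -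
      √2 * t / (1 + t ^ 2) * (-√2 * t / (1 + t ^ 2)) = 1 / (1 + t ^ 2)
    field_simp
    linear_combination t ^ 2 * h2

theorem hasFrenetFrame_c₀ :
    HasFrenetFrame c₀ tangent₀ normal₀ binormal₀ curvature₀ curvature₀ :=
  ⟨orthonormal_frame₀, hasDerivAt_c₀, hasDerivAt_tangent₀, hasDerivAt_normal₀⟩

theorem contDiff_c₀ {k : ℕ∞ω} : ContDiff ℝ k c₀ := by
  refine contDiff_euclidean.2 fun i ↦ ?_
  fin_cases i
  · exact contDiff_arctan
  · exact ((contDiff_const.add (contDiff_id.pow 2)).log fun t ↦ by positivity).div_const √2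
  · exact contDiff_id.sub contDiff_arctan

theorem isFrenetCurve_c₀ : IsFrenetCurve c₀ :=
  hasFrenetFrame_c₀.isFrenetCurve contDiff_c₀ curvature₀_pos cross3_tangent₀_normal₀

theorem curv_c₀ : curv c₀ = curvature₀ := hasFrenetFrame_c₀.curv_eq curvature₀_pos

theorem tors_c₀ : tors c₀ = curvature₀ :=
  hasFrenetFrame_c₀.tors_eq curvature₀_pos cross3_tangent₀_normal₀

theorem injOn_curvature₀ : InjOn curvature₀ (Ici 0) := by
  refine StrictAntiOn.injOn fun s hs t _ hst ↦ ?_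
  have hs : 0 ≤ s := hs
  unfold curvature₀
  gcongr

theorem leftInverse_c₀ : Function.LeftInverse (fun x : E3 ↦ x 0 + x 2) c₀ :=
  fun t ↦ add_sub_cancel (arctan t) t

end Crease

section Angles

theorem α₀_mem_Ioo {t : ℝ} (ht : t ∈ Ioo 0 1) : α₀ t ∈ Ioo (π / 3) (π / 2) := by
  obtain ⟨h0, h1⟩ := ht
  constructor <;> unfold α₀ <;> nlinarith [pi_pos]

theorem contDiff_α₀ {k : ℕ∞ω} : ContDiff ℝ k α₀ := by
  unfold α₀
  fun_prop

theorem strictMono_α₀ : StrictMono α₀ := fun s t hst ↦ by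
  unfold α₀
  gcongr

theorem cos_α₀_pos {t : ℝ} (ht : t ∈ Ioo 0 1) : 0 < cos (α₀ t) :=
  cos_pos_of_mem_Ioo ⟨by linarith [(α₀_mem_Ioo ht).1, pi_pos], (α₀_mem_Ioo ht).2⟩

/-- The cosine `κ(t) cos α(t) / κ(1 - t)` of the first angular function of the inverse strip. -/
def cosα₀st (t : ℝ) : ℝ := cos (α₀ t) * ((1 + (1 - t) ^ 2) / (1 + t ^ 2))

theorem α₀st_eq_arccos (t : ℝ) : α₀st t = arccos (cosα₀st t) := by
  have : 0 < √2 := by positivity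
  rw [α₀st, show c₀r = fun s ↦ c₀ (1 - s) from rfl, curv_comp_const_sub, curv_c₀]
  unfold curvature₀ cosα₀st
  congr 1
  field_simp

theorem contDiff_cosα₀st {k : ℕ∞ω} : ContDiff ℝ k cosα₀st :=
  contDiff_α₀.cos.mul (ContDiff.div (by fun_prop) (by fun_prop) fun t ↦ by positivity)

theorem cosα₀st_mem_Ioo {t : ℝ} (ht : t ∈ Ioo 0 1) : cosα₀st t ∈ Ioo 0 1 := by
  have cos_lt : cos (α₀ t) < 1 / 2 := by
    rw [← cos_pi_div_three]
    exact cos_lt_cos_of_nonneg_of_le_pi_div_two (by positivity) (α₀_mem_Ioo ht).2.le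
      (α₀_mem_Ioo ht).1
  have ratio_lt : (1 + (1 - t) ^ 2) / (1 + t ^ 2) < 2 := by
    rw [div_lt_iff₀ (by positivity)]
    nlinarith [ht.1]
  refine ⟨mul_pos (cos_α₀_pos ht) (by positivity), ?_⟩
  calc cosα₀st t < 1 / 2 * 2 := mul_lt_mul'' cos_lt ratio_lt (cos_α₀_pos ht).le (by positivity)
    _ = 1 := by norm_num

theorem isAngleFunction_α₀ : IsAngleFunction (Ioo 0 1) α₀ where
  contDiffAt _ _ := contDiff_α₀.contDiffAt
  ne_zero t ht := by linarith [(α₀_mem_Ioo ht).1, pi_pos]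
  abs_lt_pi_div_two t ht := by
    rw [abs_of_pos (by linarith [(α₀_mem_Ioo ht).1, pi_pos])]
    exact (α₀_mem_Ioo ht).2

theorem isAngleFunction_α₀st : IsAngleFunction (Ioo 0 1) α₀st where
  contDiffAt t ht := by
    obtain ⟨h0, h1⟩ := cosα₀st_mem_Ioo ht
    rw [funext α₀st_eq_arccos]
    exact (contDiffAt_arccos (by linarith) h1.ne).comp t contDiff_cosα₀st.contDiffAt
  ne_zero t ht := by
    rw [α₀st_eq_arccos]
    exact (arccos_pos.2 (cosα₀st_mem_Ioo ht).2).ne'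
  abs_lt_pi_div_two t ht := by
    rw [α₀st_eq_arccos, abs_of_nonneg (arccos_nonneg _)]
    exact arccos_lt_pi_div_two.2 (cosα₀st_mem_Ioo ht).1

theorem α₀_lt_α₀st {t : ℝ} (ht : t ∈ Ioo (1 / 2) 1) : α₀ t < α₀st t := by
  have ht01 : t ∈ Ioo 0 1 := ⟨one_half_pos.trans ht.1, ht.2⟩
  have cos_decreases : cosα₀st t < cos (α₀ t) := by
    refine mul_lt_of_lt_one_right (cos_α₀_pos ht01) ((div_lt_one (by positivity)).2 ?_)
    nlinarith [ht.1]
  calc α₀ t = arccos (cos (α₀ t)) := (arccos_cos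
      (by linarith [(α₀_mem_Ioo ht01).1, pi_pos]) (by linarith [(α₀_mem_Ioo ht01).2, pi_pos])).symm
    _ < arccos (cosα₀st t) := arccos_lt_arccos (by linarith [(cosα₀st_mem_Ioo ht01).1])
      cos_decreases (cos_le_one _)
    _ = α₀st t := (α₀st_eq_arccos t).symm

/-- The first angular functions of the four curved foldings, all measured along `c₀` itself:
reversing the orientation of the crease replaces `a` by `s ↦ -a (1 - s)`. -/
def foldingAngle : Fin 4 → ℝ → ℝ :=
  ![α₀, -α₀, fun s ↦ -α₀st (1 - s), fun s ↦ α₀st (1 - s)]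

theorem isAngleFunction_foldingAngle (i : Fin 4) : IsAngleFunction (Ioo 0 1) (foldingAngle i) := by
  have hrev : IsAngleFunction (Ioo 0 1) fun s ↦ α₀st (1 - s) :=
    isAngleFunction_α₀st.comp_const_sub (fun t ht ↦ ⟨by linarith [ht.2], by linarith [ht.1]⟩)
  fin_cases i
  exacts [isAngleFunction_α₀, isAngleFunction_α₀.neg, hrev.neg, hrev]

theorem injective_foldingAngle_one_quarter : Function.Injective fun i ↦ foldingAngle i (1 / 4) := by
  have hpos : 0 < α₀ (1 / 4) := by
    unfold α₀
    positivity
  have hlt : α₀ (1 / 4) < α₀st (1 - 1 / 4) :=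
    (strictMono_α₀ (by norm_num)).trans (α₀_lt_α₀st (by norm_num))
  intro i j hij
  fin_cases i <;> fin_cases j <;> simp [foldingAngle] at hij ⊢ <;> linarith

end Angles

section TheoremB

/-- The parameter interval of the crease. -/
abbrev creaseInterval : Set ℝ := Icc (1/10) (9/10)

theorem creaseInterval_subset : creaseInterval ⊆ Ioo 0 1 :=
  Icc_subset_Ioo (by norm_num) (by norm_num)

theorem one_quarter_mem_interior_creaseInterval : 1/4 ∈ interior creaseInterval := by
  rw [interior_Icc]
  norm_num

theorem image_one_sub_creaseInterval : (fun t ↦ 1 - t) '' creaseInterval = creaseInterval := by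
  rw [image_const_sub_Icc]
  norm_num

theorem curv_c₀_mul_sin_α₀_ne_zero {t : ℝ} (ht : t ∈ creaseInterval) :
    curv c₀ t * sin (α₀ t) ≠ 0 :=
  mul_ne_zero (isFrenetCurve_c₀.curv_ne_zero t)
    (isAngleFunction_α₀.sin_ne_zero (creaseInterval_subset ht))

theorem curv_c₀r_mul_sin_α₀st_ne_zero {t : ℝ} (ht : t ∈ creaseInterval) :
    curv c₀r t * sin (α₀st t) ≠ 0 :=
  mul_ne_zero ((curv_comp_const_sub c₀ 1 t).trans_ne (isFrenetCurve_c₀.curv_ne_zero _))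
    (isAngleFunction_α₀st.sin_ne_zero (creaseInterval_subset ht))

theorem curvedFolding_c₀r (a : ℝ → ℝ) (ε : ℝ) :
    curvedFolding creaseInterval c₀r a ε = curvedFolding creaseInterval c₀ (fun s ↦ -a (1 - s)) ε :=
  curvedFolding_comp_const_sub c₀ a image_one_sub_creaseInterval ε

theorem curvedFolding_c₀r_neg (a : ℝ → ℝ) (ε : ℝ) :
    curvedFolding creaseInterval c₀r (-a) ε =
      curvedFolding creaseInterval c₀ (fun s ↦ a (1 - s)) ε := by
  simpa only [Pi.neg_apply, neg_neg] using curvedFolding_c₀r (-a) ε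

theorem eventually_eq_of_image_curvedFolding_subset (j : Fin 4) :
    ∀ᶠ ε in 𝓝[>] 0, ∀ δ > 0, ∀ i, ∀ T : E3 ≃ᵢ E3,
      T '' curvedFolding creaseInterval c₀ (foldingAngle i) δ ⊆
        curvedFolding creaseInterval c₀ (foldingAngle j) ε → i = j := by
  have angle (i) := (isAngleFunction_foldingAngle i).mono creaseInterval_subset
  have hκ : InjOn (curv c₀) creaseInterval := by
    rw [curv_c₀]
    exact injOn_curvature₀.mono fun t ht ↦ (creaseInterval_subset ht).1.le
  have hτ : tors c₀ (1/4) ≠ 0 := by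
    rw [tors_c₀]
    exact (curvature₀_pos _).ne'
  filter_upwards [isFrenetCurve_c₀.eventually_angle_eq_of_image_subset isCompact_Icc hκ
    (by fun_prop) leftInverse_c₀ ⟨_, one_quarter_mem_interior_creaseInterval, hτ⟩ (angle j)]
    with ε hε δ hδ i T hT
  exact injective_foldingAngle_one_quarter
    (hε δ hδ _ (angle i) T hT one_quarter_mem_interior_creaseInterval)

end TheoremB

/-- Theorem B: for the crease `C₀ = c₀([1/10, 9/10])` with first
angular function `α(t) = π(t+10)/24`, the four curved foldings
`P₁(δ) = φ_f(Ω_δ)`, `P₂(δ) = ψ_f(Ω_δ)`, `P₃(δ) = φ_{f_*}(Ω_δ)`,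
`P₄(δ) = ψ_{f_*}(Ω_δ)` with common crease and crease pattern are mutually
non-congruent: for all sufficiently small `ε > 0`, any `δ ∈ (0, ε]` and any
isometry `T` of `ℝ³`, `T(P_i(δ)) ⊆ P_j(ε)` forces `i = j`. -/
theorem stmt14
    -- the second angular functions of `f` and its dual `f̌`, determined by
    -- `cot β = (α' + τ)/(κ sin α)` and `cot β̌ = (α' - τ)/(κ sin α)`:
    (β βc : ℝ → ℝ)
    (hβ : ∀ t ∈ Icc (1/10 : ℝ) (9/10), 0 < β t ∧ β t < π ∧
      cos (β t) * (curv c₀ t * sin (α₀ t)) =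
        (deriv α₀ t + tors c₀ t) * sin (β t))
    (hβc : ∀ t ∈ Icc (1/10 : ℝ) (9/10), 0 < βc t ∧ βc t < π ∧
      cos (βc t) * (curv c₀ t * sin (α₀ t)) =
        (deriv α₀ t - tors c₀ t) * sin (βc t))
    -- the second angular functions of the inverse `f_*` and its dual `f̌_*`:
    (βs βcs : ℝ → ℝ)
    (hβs : ∀ t ∈ Icc (1/10 : ℝ) (9/10), 0 < βs t ∧ βs t < π ∧
      cos (βs t) * (curv c₀r t * sin (α₀st t)) =
        (deriv α₀st t + tors c₀r t) * sin (βs t))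
    (hβcs : ∀ t ∈ Icc (1/10 : ℝ) (9/10), 0 < βcs t ∧ βcs t < π ∧
      cos (βcs t) * (curv c₀r t * sin (α₀st t)) =
        (deriv α₀st t - tors c₀r t) * sin (βcs t))
    -- the normalized ruling vector fields of the four strips:
    (ξ ξc ξs ξcs : ℝ → E3)
    (hξ : ∀ t, ξ t = cos (β t) • tang c₀ t +
      sin (β t) • (cos (α₀ t) • pnorm c₀ t + sin (α₀ t) • binorm c₀ t))
    (hξc : ∀ t, ξc t = cos (βc t) • tang c₀ t +
      sin (βc t) • (cos (α₀ t) • pnorm c₀ t - sin (α₀ t) • binorm c₀ t))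
    (hξs : ∀ t, ξs t = cos (βs t) • tang c₀r t +
      sin (βs t) • (cos (α₀st t) • pnorm c₀r t + sin (α₀st t) • binorm c₀r t))
    (hξcs : ∀ t, ξcs t = cos (βcs t) • tang c₀r t +
      sin (βcs t) • (cos (α₀st t) • pnorm c₀r t - sin (α₀st t) • binorm c₀r t))
    -- the origami maps `φ_f`, `ψ_f`, `φ_{f_*}`, `ψ_{f_*}`:
    (φ ψ φs ψs : ℝ × ℝ → E3)
    (hφ : ∀ t v, φ (t, v) = if 0 ≤ v then c₀ t + v • ξ t else c₀ t + v • ξc t)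
    (hψ : ∀ t v, ψ (t, v) = if 0 ≤ v then c₀ t + v • ξc t else c₀ t + v • ξ t)
    (hφs : ∀ t v, φs (t, v) =
      if 0 ≤ v then c₀r t + v • ξs t else c₀r t + v • ξcs t)
    (hψs : ∀ t v, ψs (t, v) =
      if 0 ≤ v then c₀r t + v • ξcs t else c₀r t + v • ξs t)
    -- the four curved foldings:
    (P : Fin 4 → ℝ → Set E3)
    (hP : ∀ δ : ℝ,
      P 0 δ = φ '' (Icc (1/10 : ℝ) (9/10) ×ˢ Ioo (-δ) δ) ∧
      P 1 δ = ψ '' (Icc (1/10 : ℝ) (9/10) ×ˢ Ioo (-δ) δ) ∧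
      P 2 δ = φs '' (Icc (1/10 : ℝ) (9/10) ×ˢ Ioo (-δ) δ) ∧
      P 3 δ = ψs '' (Icc (1/10 : ℝ) (9/10) ×ˢ Ioo (-δ) δ)) :
    ∃ ε₀ > (0 : ℝ), ∀ ε : ℝ, 0 < ε → ε ≤ ε₀ → ∀ δ : ℝ, 0 < δ → δ ≤ ε →
      ∀ i j : Fin 4, ∀ T : E3 ≃ᵢ E3, T '' P i δ ⊆ P j ε → i = j := by
  have rξ := eqOn_ruling (fun _ ↦ curv_c₀_mul_sin_α₀_ne_zero) hβ hξ
  have rξc := eqOn_ruling_neg (fun _ ↦ curv_c₀_mul_sin_α₀_ne_zero) hβc hξc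
  have rξs := eqOn_ruling (fun _ ↦ curv_c₀r_mul_sin_α₀st_ne_zero) hβs hξs
  have rξcs := eqOn_ruling_neg (fun _ ↦ curv_c₀r_mul_sin_α₀st_ne_zero) hβcs hξcs
  have P_eq (i : Fin 4) (δ : ℝ) : P i δ = curvedFolding creaseInterval c₀ (foldingAngle i) δ := by
    obtain ⟨h0, h1, h2, h3⟩ := hP δ
    fin_cases i
    · exact h0.trans (image_origami_eq_curvedFolding δ rξ rξc hφ)
    · exact h1.trans (image_dual_origami_eq_curvedFolding δ rξ rξc hψ)
    · exact (h2.trans (image_origami_eq_curvedFolding δ rξs rξcs hφs)).trans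
        (curvedFolding_c₀r _ δ)
    · exact (h3.trans (image_dual_origami_eq_curvedFolding δ rξs rξcs hψs)).trans
        (curvedFolding_c₀r_neg _ δ)
  obtain ⟨ε₀, hε₀, h⟩ := mem_nhdsGT_iff_exists_Ioc_subset.1
    (eventually_all.2 eventually_eq_of_image_curvedFolding_subset)
  refine ⟨ε₀, hε₀, fun ε hε hεε₀ δ hδ _ i j T hT ↦ h ⟨hε, hεε₀⟩ j δ hδ i T ?_⟩
  rwa [P_eq, P_eq] at hT
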